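/- arXiv:2510.09929 — 2 statements merged into one kernel-verified Lean document; each statement's English description precedes it below -/
import Mathlib

section
/- Let h : ℝ^n → ℝ be continuous and α be a class K function. Then h is a viscosity CBF with respect to α if and only if the function x ↦ max{0, h(x)} is a viscosity CBF with respect to α. -/
open Set Filter MeasureTheory Topology

noncomputable section

/-- `α : [0,∞) → [0,∞)` is a class `K` function: continuous, strictly increasing, `α 0 = 0`. -/
def IsClassK (α : ℝ → ℝ) : Prop :=
  ContinuousOn α (Set.Ici 0) ∧ StrictMonoOn α (Set.Ici 0) ∧ α 0 = 0

/-- `h` is a viscosity CBF with respect to `α`: for every `x` with `h x > 0` and every `C¹`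
test function `φ` such that `h - φ` has a local maximum at `x`, one has
`max_{u ∈ U} ∇φ(x) · f(x,u) ≥ -α (h x)`. -/
def IsViscosityCBF {n m : ℕ} (f : (Fin n → ℝ) → (Fin m → ℝ) → Fin n → ℝ)
    (U : Set (Fin m → ℝ)) (α : ℝ → ℝ) (h : (Fin n → ℝ) → ℝ) : Prop :=
  Continuous h ∧
    ∀ x : Fin n → ℝ, 0 < h x →
      ∀ φ : (Fin n → ℝ) → ℝ, ContDiff ℝ 1 φ →
        IsLocalMax (fun y => h y - φ y) x →
        -α (h x) ≤ sSup ((fun u => fderiv ℝ φ x (f x u)) '' U)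

/-!
The viscosity condition at `x` only sees the germ of `h` at `x`, and is only imposed where
`0 < h x`. By continuity, `h` and `max 0 h` have the same germ at every such point.
-/

theorem eventuallyEq_max_of_tendsto_of_lt {X R : Type*} [LinearOrder R] [TopologicalSpace R]
    [OrderClosedTopology R] {l : Filter X} {h : X → R} {b c : R}
    (hlim : Tendsto h l (𝓝 b)) (hcb : c < b) : (fun y => max c (h y)) =ᶠ[l] h :=
  (hlim.eventually_const_lt hcb).mono fun _ hy => max_eq_right hy.le

section Locality

variable {n m : ℕ} {f : (Fin n → ℝ) → (Fin m → ℝ) → Fin n → ℝ} {U : Set (Fin m → ℝ)}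
  {α : ℝ → ℝ} {g h : (Fin n → ℝ) → ℝ}

theorem IsViscosityCBF.of_eventuallyEq (H : IsViscosityCBF f U α h) (hg : Continuous g)
    (hgh : ∀ x, 0 < g x → g =ᶠ[𝓝 x] h) : IsViscosityCBF f U α g := by
  refine ⟨hg, fun x hx φ hφ hmax => ?_⟩
  have hval : g x = h x := (hgh x hx).eq_of_nhds
  have hmax' : IsLocalMax (fun y => h y - φ y) x :=
    ((hgh x hx).sub EventuallyEq.rfl).isLocalMax_iff.1 hmax
  rw [hval] at hx ⊢
  exact H.2 x hx φ hφ hmax'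

theorem isViscosityCBF_iff_max_zero_general (hh : Continuous h) :
    IsViscosityCBF f U α h ↔ IsViscosityCBF f U α (fun x => max 0 (h x)) := by
  have hloc : ∀ x, 0 < h x → (fun y => max 0 (h y)) =ᶠ[𝓝 x] h := fun x hx =>
    eventuallyEq_max_of_tendsto_of_lt hh.continuousAt hx
  constructor
  · refine fun H => H.of_eventuallyEq (continuous_const.max hh) fun x hx => hloc x ?_
    exact (lt_max_iff.1 hx).resolve_left (lt_irrefl 0)
  · exact fun H => H.of_eventuallyEq hh fun x hx => (hloc x hx).symm

end Locality

/-- `h` is a viscosity CBF w.r.t. `α` iff `max {0, h}` is. -/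
theorem isViscosityCBF_iff_max_zero {n m : ℕ}
    (f : (Fin n → ℝ) → (Fin m → ℝ) → Fin n → ℝ) (U : Set (Fin m → ℝ))
    (hU : IsCompact U)
    (hf : ∃ K : NNReal, LipschitzOnWith K (Function.uncurry f) (Set.univ ×ˢ U))
    (α : ℝ → ℝ) (hα : IsClassK α)
    (h : (Fin n → ℝ) → ℝ) (hh : Continuous h) :
    IsViscosityCBF f U α h ↔ IsViscosityCBF f U α (fun x => max 0 (h x)) :=
  isViscosityCBF_iff_max_zero_general hh
end
end

section
/- Let g : ℝ^n → [0,∞) be continuous and α be a locally Lipschitz class K function. Then the control barrier value function v corresponding to g and α is continuous on ℝ^n × [0,∞), satisfies v(·,0) = g, and is a viscosity solution on ℝ^n × (0,∞) of the HJ-PDE max{ ∂_T v − H_α(x, v, ∇v), v − g(x) } = 0; moreover it is the unique continuous function ℝ^n × [0,∞) → [0,∞) with these properties. -/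
open Set Filter MeasureTheory Topology

noncomputable section

/-- `α` is a locally Lipschitz class `K` function on `[0,∞)`. -/
def IsLocallyLipschitzClassK (α : ℝ → ℝ) : Prop :=
  IsClassK α ∧
    ∀ x ∈ Set.Ici (0 : ℝ), ∃ K : NNReal, ∃ s ∈ nhdsWithin x (Set.Ici (0 : ℝ)),
      LipschitzOnWith K α s

/-- `β` is the function `β_α`: for each `r ≥ 0`, `t ↦ β r t` solves `y' = -α y`, `y 0 = r`,
staying in `[0, r]` for all `t ≥ 0`. -/
def IsBetaFor (α : ℝ → ℝ) (β : ℝ → ℝ → ℝ) : Prop :=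
  ∀ r : ℝ, 0 ≤ r →
    β r 0 = r ∧ ∀ t : ℝ, 0 ≤ t →
      0 ≤ β r t ∧ β r t ≤ r ∧ HasDerivWithinAt (β r) (-α (β r t)) (Set.Ici 0) t

/-- `u` is an admissible control signal: measurable, valued in `U` on `[0,∞)`. -/
def IsControl {m : ℕ} (U : Set (Fin m → ℝ)) (u : ℝ → Fin m → ℝ) : Prop :=
  Measurable u ∧ ∀ t : ℝ, 0 ≤ t → u t ∈ U

/-- `ξ` is an admissible trajectory from `x` under the control signal `u`. -/
def IsTrajectory {n m : ℕ} (f : (Fin n → ℝ) → (Fin m → ℝ) → Fin n → ℝ)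
    (x : Fin n → ℝ) (u : ℝ → Fin m → ℝ) (ξ : ℝ → Fin n → ℝ) : Prop :=
  Continuous ξ ∧ ∀ t : ℝ, 0 ≤ t → ξ t = x + ∫ s in (0 : ℝ)..t, f (ξ s) (u s)

/-- The anti-discounted payoff defining the CB-VF: the supremum over control signals `u`
and admissible trajectories `ξ` from `x` of `min_{t ∈ [0,T]} β_α (g (ξ t)) (T - t)`. -/
def cbvfPayoff {n m : ℕ} (f : (Fin n → ℝ) → (Fin m → ℝ) → Fin n → ℝ)
    (U : Set (Fin m → ℝ)) (β : ℝ → ℝ → ℝ) (g : (Fin n → ℝ) → ℝ)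
    (x : Fin n → ℝ) (T : ℝ) : ℝ :=
  sSup {y : ℝ | ∃ u ξ, IsControl U u ∧ IsTrajectory f x u ξ ∧
    y = sInf ((fun t => β (g (ξ t)) (T - t)) '' Set.Icc 0 T)}

/-- `v` is a viscosity solution on `ℝⁿ × (0,∞)` of the HJ-PDE
`max { ∂_T v - H_α(x, v, ∇v), v - g x } = 0`, where
`H_α(x,r,λ) = max_{u ∈ U} λ · f(x,u) + α r`. -/
def IsViscositySolnCBVF {n m : ℕ} (f : (Fin n → ℝ) → (Fin m → ℝ) → Fin n → ℝ)
    (U : Set (Fin m → ℝ)) (α : ℝ → ℝ) (g : (Fin n → ℝ) → ℝ)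
    (v : (Fin n → ℝ) × ℝ → ℝ) : Prop :=
  (∀ p : (Fin n → ℝ) × ℝ, 0 < p.2 →
    ∀ φ : (Fin n → ℝ) × ℝ → ℝ, ContDiff ℝ 1 φ →
      IsLocalMax (fun q => v q - φ q) p →
      max (fderiv ℝ φ p ((0, 1) : (Fin n → ℝ) × ℝ) -
          (sSup ((fun u => fderiv ℝ φ p (f p.1 u, 0)) '' U) + α (v p)))
        (v p - g p.1) ≤ 0) ∧
  (∀ p : (Fin n → ℝ) × ℝ, 0 < p.2 →
    ∀ φ : (Fin n → ℝ) × ℝ → ℝ, ContDiff ℝ 1 φ →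
      IsLocalMin (fun q => v q - φ q) p →
      0 ≤ max (fderiv ℝ φ p ((0, 1) : (Fin n → ℝ) × ℝ) -
          (sSup ((fun u => fderiv ℝ φ p (f p.1 u, 0)) '' U) + α (v p)))
        (v p - g p.1))

/-!
The functions `β_α(·, t)` form a flow of strictly increasing maps, so `v(x, T) > r` means that some
admissible trajectory from `x` keeps `g` above `β_α(r, ·)` on `[0, T]`. Continuous dependence of
trajectories on `x` then gives continuity of `v`. Restarting and concatenating trajectories gives
dynamic programming: up to an arbitrarily small error some trajectory satisfies
`β_α(v(x, T), h) ≤ v(ξ(h), T - h)`, and where `v < g` every trajectory satisfies the opposite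
inequality for small `h`. Dividing by `h → 0` along a test function yields the HJ equation.

For uniqueness, let `w₁` be a sub-solution and `w₂` a super-solution with `w₁ > w₂` somewhere. Let
`ρ = e^{cT}(1 + |x|²)`, with `c` so large that `∂_T ρ ≥ H(x, ∇ρ) + 1`. For every large `k`, some
multiple `ψ = θ e^{kρ}` touches `w₁ - w₂` from above at a point with `T > 0`. Doubling of variables
gives `∂_T ψ ≤ H(x, ∇ψ) + α(w₁) - α(w₂)` there, so `k` cannot exceed the Lipschitz constant of `α`.
-/

/-! ### The flow `β_α` -/

lemma abs_sub_min_le {S t T : ℝ} (ht : t ≤ T) : |t - min t S| ≤ |T - S| := by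
  rcases le_total t S with h | h
  · simp [h]
  · rw [min_eq_right h, abs_of_nonneg (sub_nonneg.2 h)]
    exact (sub_le_sub_right ht S).trans (le_abs_self _)

lemma le_of_hasDerivWithinAt_of_eventually_le {F G : ℝ → ℝ} {F' G' a : ℝ}
    (hF : HasDerivWithinAt F F' (Ici a) a) (hG : HasDerivWithinAt G G' (Ici a) a) (ha : F a = G a)
    (hle : ∀ᶠ h in 𝓝[>] a, F h ≤ G h) : F' ≤ G' := by
  rw [← hasDerivWithinAt_Ioi_iff_Ici,
    hasDerivWithinAt_iff_tendsto_slope' self_notMem_Ioi] at hF hG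
  refine le_of_tendsto_of_tendsto hF hG ?_
  filter_upwards [hle, self_mem_nhdsWithin] with h hFG (hh : a < h)
  simp only [slope_def_field, ha]
  gcongr

lemma exists_lipschitzOnWith_Icc {α : ℝ → ℝ} (hα : LocallyLipschitzOn (Ici 0) α) (r : ℝ) :
    ∃ K, LipschitzOnWith K α (Icc 0 r) :=
  (hα.mono Icc_subset_Ici_self).exists_lipschitzOnWith_of_compact isCompact_Icc

namespace IsBetaFor

variable {α : ℝ → ℝ} {β : ℝ → ℝ → ℝ} {r r' s t : ℝ}

lemma zero (hβ : IsBetaFor α β) (hr : 0 ≤ r) : β r 0 = r :=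
  (hβ r hr).1

lemma nonneg (hβ : IsBetaFor α β) (hr : 0 ≤ r) (ht : 0 ≤ t) : 0 ≤ β r t :=
  ((hβ r hr).2 t ht).1

lemma le_init (hβ : IsBetaFor α β) (hr : 0 ≤ r) (ht : 0 ≤ t) : β r t ≤ r :=
  ((hβ r hr).2 t ht).2.1

lemma mem_Icc (hβ : IsBetaFor α β) (hr : 0 ≤ r) (ht : 0 ≤ t) : β r t ∈ Icc 0 r :=
  ⟨hβ.nonneg hr ht, hβ.le_init hr ht⟩

lemma hasDerivWithinAt (hβ : IsBetaFor α β) (hr : 0 ≤ r) (ht : 0 ≤ t) :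
    HasDerivWithinAt (β r) (-α (β r t)) (Ici 0) t :=
  ((hβ r hr).2 t ht).2.2

lemma continuousOn (hβ : IsBetaFor α β) (hr : 0 ≤ r) : ContinuousOn (β r) (Ici 0) :=
  fun _ ht => (hβ.hasDerivWithinAt hr ht).continuousWithinAt

lemma exists_lipschitzOnWith (hα : LocallyLipschitzOn (Ici 0) α) (hβ : IsBetaFor α β) (R : ℝ)
    (ht : 0 ≤ t) : ∃ K, LipschitzOnWith K (fun r => β r t) (Icc 0 R) := by
  obtain ⟨K, hK⟩ := exists_lipschitzOnWith_Icc hα R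
  have deriv_right (r : ℝ) (hr : r ∈ Icc 0 R) (τ : ℝ) (hτ : τ ∈ Ico 0 t) :
      HasDerivWithinAt (β r) (-α (β r τ)) (Ici τ) τ :=
    (hβ.hasDerivWithinAt hr.1 hτ.1).mono (Ici_subset_Ici.2 hτ.1)
  have mem (r : ℝ) (hr : r ∈ Icc 0 R) (τ : ℝ) (hτ : τ ∈ Ico 0 t) : β r τ ∈ Icc 0 R :=
    Icc_subset_Icc_right hr.2 (hβ.mem_Icc hr.1 hτ.1)
  have cont (r : ℝ) (hr : r ∈ Icc 0 R) : ContinuousOn (β r) (Icc 0 t) :=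
    (hβ.continuousOn hr.1).mono Icc_subset_Ici_self
  refine ⟨Real.toNNReal (Real.exp (K * t)), LipschitzOnWith.of_dist_le_mul fun r hr r' hr' => ?_⟩
  rw [Real.coe_toNNReal _ (Real.exp_nonneg _), mul_comm]
  simpa using dist_le_of_trajectories_ODE_of_mem (v := fun _ y => -α y) (fun _ _ => hK.neg)
    (cont r hr) (deriv_right r hr) (mem r hr) (cont r' hr') (deriv_right r' hr') (mem r' hr')
    (by rw [hβ.zero hr.1, hβ.zero hr'.1]) t (right_mem_Icc.2 ht)

lemma continuousOn_init (hα : LocallyLipschitzOn (Ici 0) α) (hβ : IsBetaFor α β) (ht : 0 ≤ t) :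
    ContinuousOn (fun r => β r t) (Ici 0) := fun r (hr : 0 ≤ r) => by
  obtain ⟨K, hK⟩ := hβ.exists_lipschitzOnWith hα (r + 1) ht
  refine (hK.continuousOn r ⟨hr, by linarith⟩).mono_of_mem_nhdsWithin ?_
  exact inter_mem_nhdsWithin _ (Iic_mem_nhds (lt_add_one r))

lemma comp_add (hα : LocallyLipschitzOn (Ici 0) α) (hβ : IsBetaFor α β) (hr : 0 ≤ r)
    (hs : 0 ≤ s) (ht : 0 ≤ t) : β (β r s) t = β r (s + t) := by
  obtain ⟨K, hK⟩ := exists_lipschitzOnWith_Icc hα r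
  have hrs := hβ.nonneg hr hs
  have deriv_shift (τ : ℝ) (hτ : 0 ≤ τ) :
      HasDerivWithinAt (fun τ => β r (s + τ)) (-α (β r (s + τ))) (Ici 0) τ :=
    ((hβ.hasDerivWithinAt hr (add_nonneg hs hτ)).comp τ
      ((hasDerivAt_id τ).const_add s).hasDerivWithinAt
        fun σ hσ => add_nonneg hs hσ).congr_deriv (mul_one _)
  exact ODE_solution_unique_of_mem_Icc_right (v := fun _ y => -α y) (s := fun _ => Icc 0 r)
    (f := β (β r s)) (g := fun τ => β r (s + τ)) (fun _ _ => hK.neg)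
    ((hβ.continuousOn hrs).mono Icc_subset_Ici_self)
    (fun τ hτ => (hβ.hasDerivWithinAt hrs hτ.1).mono (Ici_subset_Ici.2 hτ.1))
    (fun τ hτ => Icc_subset_Icc_right (hβ.le_init hr hs) (hβ.mem_Icc hrs hτ.1))
    (fun τ hτ => (deriv_shift τ hτ.1).continuousWithinAt.mono Icc_subset_Ici_self)
    (fun τ hτ => (deriv_shift τ hτ.1).mono (Ici_subset_Ici.2 hτ.1))
    (fun τ hτ => hβ.mem_Icc hr (add_nonneg hs hτ.1)) (by simp [hβ.zero hrs]) (right_mem_Icc.2 ht)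

lemma injOn_init (hα : LocallyLipschitzOn (Ici 0) α) (hβ : IsBetaFor α β) (ht : 0 ≤ t) :
    InjOn (fun r => β r t) (Ici 0) := fun r hr r' hr' heq => by
  obtain ⟨K, hK⟩ := exists_lipschitzOnWith_Icc hα (max r r')
  have deriv_left (ρ : ℝ) (hρ : 0 ≤ ρ) (τ : ℝ) (hτ : τ ∈ Ioc 0 t) :
      HasDerivWithinAt (β ρ) (-α (β ρ τ)) (Iic τ) τ :=
    ((hβ.hasDerivWithinAt hρ hτ.1.le).hasDerivAt (Ici_mem_nhds hτ.1)).hasDerivWithinAt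
  have mem (ρ : ℝ) (hρ : 0 ≤ ρ) (hle : ρ ≤ max r r') (τ : ℝ) (hτ : τ ∈ Ioc 0 t) :
      β ρ τ ∈ Icc 0 (max r r') :=
    Icc_subset_Icc_right hle (hβ.mem_Icc hρ hτ.1.le)
  have cont (ρ : ℝ) (hρ : 0 ≤ ρ) : ContinuousOn (β ρ) (Icc 0 t) :=
    (hβ.continuousOn hρ).mono Icc_subset_Ici_self
  have h0 := ODE_solution_unique_of_mem_Icc_left (v := fun _ y => -α y) (fun _ _ => hK.neg)
    (cont r hr) (deriv_left r hr) (mem r hr (le_max_left _ _))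
    (cont r' hr') (deriv_left r' hr') (mem r' hr' (le_max_right _ _)) heq (left_mem_Icc.2 ht)
  rwa [hβ.zero hr, hβ.zero hr'] at h0

lemma strictMonoOn_init (hα : LocallyLipschitzOn (Ici 0) α) (hβ : IsBetaFor α β) (ht : 0 ≤ t) :
    StrictMonoOn (fun r => β r t) (Ici 0) := fun r hr r' hr' hlt => by
  by_contra! hle
  have hcont : ContinuousOn (fun s => β r' s - β r s) (Icc 0 t) :=
    ((hβ.continuousOn hr').sub (hβ.continuousOn hr)).mono Icc_subset_Ici_self
  obtain ⟨s, hs, hcross⟩ := intermediate_value_Icc' ht hcont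
    (show (0 : ℝ) ∈ Icc (β r' t - β r t) (β r' 0 - β r 0) by
      rw [hβ.zero hr, hβ.zero hr']; exact ⟨sub_nonpos.2 hle, sub_nonneg.2 hlt.le⟩)
  exact hlt.ne (hβ.injOn_init hα hs.1 hr hr' (sub_eq_zero.1 hcross).symm)

lemma antitoneOn (hα : LocallyLipschitzOn (Ici 0) α) (hβ : IsBetaFor α β) (hr : 0 ≤ r) :
    AntitoneOn (β r) (Ici 0) := fun s hs t _ hst => by
  rw [← add_sub_cancel s t, ← hβ.comp_add hα hr hs (sub_nonneg.2 hst)]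
  exact hβ.le_init (hβ.nonneg hr hs) (sub_nonneg.2 hst)

lemma exists_pos_forall_le_sub (hα : LocallyLipschitzOn (Ici 0) α) (hβ : IsBetaFor α β)
    (hr : 0 ≤ r) (hrr' : r < r') (T : ℝ) : ∃ ε > 0, ∀ t ∈ Icc 0 T, ε ≤ β r' t - β r t :=
  isCompact_Icc.exists_forall_le'
    (((hβ.continuousOn (hr.trans hrr'.le)).sub (hβ.continuousOn hr)).mono Icc_subset_Ici_self)
    fun _ ht => sub_pos.2 (hβ.strictMonoOn_init hα ht.1 hr (hr.trans hrr'.le) hrr')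

end IsBetaFor

/-! ### Carathéodory differential equations -/

lemma le_mul_exp_of_le_add_integral {a : ℝ → ℝ} (ha : Continuous a) {δ K T : ℝ} (hK : 0 ≤ K)
    (hle : ∀ t ∈ Icc 0 T, a t ≤ δ + K * ∫ s in 0..t, a s) :
    ∀ t ∈ Icc 0 T, a t ≤ δ * Real.exp (K * t) := fun t ht => by
  have hderiv (τ : ℝ) : HasDerivAt (fun τ => δ + K * ∫ s in 0..τ, a s) (K * a τ) τ :=
    ((ha.integral_hasStrictDerivAt 0 τ).hasDerivAt.const_mul K).const_add δ
  have hgron := le_gronwallBound_of_liminf_deriv_right_le (δ := δ) (K := K) (ε := 0)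
    (fun τ _ => (hderiv τ).continuousAt.continuousWithinAt)
    (fun τ _ _ hr => (hderiv τ).hasDerivWithinAt.liminf_right_slope_le hr) (by simp)
    (fun τ hτ => by
      rw [add_zero]; exact mul_le_mul_of_nonneg_left (hle τ ⟨hτ.1, hτ.2.le⟩) hK) t ht
  rw [gronwallBound_ε0, sub_zero] at hgron
  exact (hle t ht).trans hgron

section Caratheodory

variable {E : Type*} [NormedAddCommGroup E]

/-- The Carathéodory conditions on a time-dependent vector field `F` on `[0,∞)` that make
`ξ' = F t ξ` uniquely solvable for all times: uniform Lipschitz continuity in space, boundedness at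
the origin, and measurability in time, the latter encoded as measurability of `t ↦ F t (η t)` along
continuous curves `η`. -/
structure IsCaratheodory (F : ℝ → E → E) (C K : NNReal) : Prop where
  aestronglyMeasurable : ∀ η : ℝ → E, Continuous η →
    AEStronglyMeasurable (fun t => F t (η t)) (volume.restrict (Ici 0))
  lipschitzWith : ∀ t, 0 ≤ t → LipschitzWith K (F t)
  norm_zero_le : ∀ t, 0 ≤ t → ‖F t 0‖ ≤ C

namespace IsCaratheodory

variable {F : ℝ → E → E} {C K : NNReal} {a b t : ℝ}

lemma norm_sub_le (hF : IsCaratheodory F C K) (ht : 0 ≤ t) (x y : E) :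
    ‖F t x - F t y‖ ≤ K * ‖x - y‖ := by
  simpa only [dist_eq_norm] using (hF.lipschitzWith t ht).dist_le_mul x y

lemma norm_le (hF : IsCaratheodory F C K) (ht : 0 ≤ t) (x : E) : ‖F t x‖ ≤ C + K * ‖x‖ :=
  calc ‖F t x‖ = ‖F t 0 + (F t x - F t 0)‖ := by rw [add_sub_cancel]
    _ ≤ ‖F t 0‖ + ‖F t x - F t 0‖ := norm_add_le _ _
    _ ≤ C + K * ‖x‖ := by
      simpa using add_le_add (hF.norm_zero_le t ht) (hF.norm_sub_le ht x 0)

lemma intervalIntegrable (hF : IsCaratheodory F C K) {η : ℝ → E} (hη : Continuous η)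
    (ha : 0 ≤ a) (hb : 0 ≤ b) : IntervalIntegrable (fun s => F s (η s)) volume a b := by
  have hpos : uIoc a b ⊆ Ici 0 := fun s hs => (le_min ha hb).trans hs.1.le
  have hbound : Continuous fun s => C + K * ‖η s‖ := by fun_prop
  refine (hbound.intervalIntegrable a b).mono_fun'
    ((hF.aestronglyMeasurable η hη).mono_measure (Measure.restrict_mono_set _ hpos)) ?_
  exact (ae_restrict_iff' measurableSet_uIoc).2 (.of_forall fun s hs => hF.norm_le (hpos hs) _)

variable [NormedSpace ℝ E]

lemma continuousOn_primitive (hF : IsCaratheodory F C K) {η : ℝ → E} (hη : Continuous η) :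
    ContinuousOn (fun t => ∫ s in 0..t, F s (η s)) (Ici 0) := fun t (ht : 0 ≤ t) => by
  have hcont : ContinuousOn (fun t => ∫ s in 0..t, F s (η s)) (uIcc 0 (t + 1)) :=
    intervalIntegral.continuousOn_primitive_interval'
      (hF.intervalIntegrable hη le_rfl (by positivity)) left_mem_uIcc
  rw [uIcc_of_le (by positivity)] at hcont
  exact (hcont t ⟨ht, by linarith⟩).mono_of_mem_nhdsWithin
    (inter_mem_nhdsWithin _ (Iic_mem_nhds (lt_add_one t)))

end IsCaratheodory

variable [NormedSpace ℝ E]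

/-- `ξ` solves `ξ' = F t ξ`, `ξ 0 = x` on `[0,∞)` in integrated form. -/
def IsIntegralSolution (F : ℝ → E → E) (x : E) (ξ : ℝ → E) : Prop :=
  Continuous ξ ∧ ∀ t, 0 ≤ t → ξ t = x + ∫ s in 0..t, F s (ξ s)

lemma exp_neg_mul_norm_integral_le {G : ℝ → E} {B L t : ℝ} (hL : 0 < L) (ht : 0 ≤ t)
    (hB : 0 ≤ B) (hG : ∀ s, 0 ≤ s → ‖G s‖ ≤ B * Real.exp (L * s)) :
    Real.exp (-(L * t)) * ‖∫ s in 0..t, G s‖ ≤ B / L := by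
  have hcont : Continuous fun s => B * Real.exp (L * s) := by fun_prop
  have hderiv (s : ℝ) :
      HasDerivAt (fun s => B / L * Real.exp (L * s)) (B * Real.exp (L * s)) s :=
    (((hasDerivAt_id s).const_mul L).exp.const_mul (B / L)).congr_deriv (by simp; field_simp)
  have hint : ‖∫ s in 0..t, G s‖ ≤ B / L * Real.exp (L * t) :=
    calc ‖∫ s in 0..t, G s‖ ≤ ∫ s in 0..t, B * Real.exp (L * s) :=
          intervalIntegral.norm_integral_le_of_norm_le ht
            (.of_forall fun s hs => hG s hs.1.le) (hcont.intervalIntegrable _ _)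
      _ = B / L * Real.exp (L * t) - B / L * Real.exp (L * 0) :=
          intervalIntegral.integral_eq_sub_of_hasDerivAt (fun s _ => hderiv s)
            (hcont.intervalIntegrable _ _)
      _ ≤ B / L * Real.exp (L * t) := sub_le_self _ (by positivity)
  calc Real.exp (-(L * t)) * ‖∫ s in 0..t, G s‖
      ≤ Real.exp (-(L * t)) * (B / L * Real.exp (L * t)) := by gcongr
    _ = B / L * Real.exp (-(L * t) + L * t) := by rw [Real.exp_add]; ring
    _ = B / L := by simp

/-- The curve `t ↦ e^{Lt} η(t)` on `[0,∞)`, extended to `ℝ`. Bounded `η` thus parametrize the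
curves of exponential growth `L`, normed à la Bielecki. -/
def expWeightedCurve (L : ℝ) (η : BoundedContinuousFunction NNReal E) (t : ℝ) : E :=
  Real.exp (L * t) • η t.toNNReal

lemma continuous_expWeightedCurve (L : ℝ) (η : BoundedContinuousFunction NNReal E) :
    Continuous (expWeightedCurve L η) := by
  unfold expWeightedCurve
  have := continuous_real_toNNReal
  fun_prop

lemma norm_expWeightedCurve_sub_le (L : ℝ) (η ζ : BoundedContinuousFunction NNReal E) (t : ℝ) :
    ‖expWeightedCurve L η t - expWeightedCurve L ζ t‖ ≤ dist η ζ * Real.exp (L * t) := by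
  rw [expWeightedCurve, expWeightedCurve, ← smul_sub, norm_smul,
    Real.norm_of_nonneg (Real.exp_nonneg _), mul_comm, ← dist_eq_norm]
  gcongr
  exact BoundedContinuousFunction.dist_coe_le_dist _

lemma norm_expWeightedCurve_le (L : ℝ) (η : BoundedContinuousFunction NNReal E) (t : ℝ) :
    ‖expWeightedCurve L η t‖ ≤ ‖η‖ * Real.exp (L * t) := by
  simpa [expWeightedCurve] using norm_expWeightedCurve_sub_le L η 0 t

/-- The Picard operator of `ξ' = F t ξ`, `ξ 0 = x`, conjugated by `expWeightedCurve`. -/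
def expWeightedPicard (F : ℝ → E → E) (L : ℝ) (x : E)
    (η : BoundedContinuousFunction NNReal E) (t : NNReal) : E :=
  Real.exp (-(L * t)) • (x + ∫ s in 0..(t : ℝ), F s (expWeightedCurve L η s))

namespace IsCaratheodory

variable {F : ℝ → E → E} {C K : NNReal} {L : ℝ}

lemma continuous_expWeightedPicard (hF : IsCaratheodory F C K) (L : ℝ) (x : E)
    (η : BoundedContinuousFunction NNReal E) : Continuous (expWeightedPicard F L x η) := by
  have hprim := (hF.continuousOn_primitive (continuous_expWeightedCurve L η)).comp_continuous
    NNReal.continuous_coe fun t => t.coe_nonneg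
  unfold expWeightedPicard
  fun_prop

lemma norm_expWeightedPicard_le (hF : IsCaratheodory F C K) (hL : 0 < L) (x : E)
    (η : BoundedContinuousFunction NNReal E) (t : NNReal) :
    ‖expWeightedPicard F L x η t‖ ≤ ‖x‖ + (C + K * ‖η‖) / L := by
  have hbound (s : ℝ) (hs : 0 ≤ s) :
      ‖F s (expWeightedCurve L η s)‖ ≤ (C + K * ‖η‖) * Real.exp (L * s) :=
    calc ‖F s (expWeightedCurve L η s)‖ ≤ C * 1 + K * (‖η‖ * Real.exp (L * s)) := by
          rw [mul_one]
          exact (hF.norm_le hs _).trans (by gcongr; exact norm_expWeightedCurve_le L η s)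
      _ ≤ C * Real.exp (L * s) + K * (‖η‖ * Real.exp (L * s)) := by
          gcongr; exact Real.one_le_exp (by positivity)
      _ = (C + K * ‖η‖) * Real.exp (L * s) := by ring
  have hexp : Real.exp (-(L * t)) ≤ 1 := Real.exp_le_one_iff.2 (neg_nonpos.2 (by positivity))
  calc ‖expWeightedPicard F L x η t‖
      ≤ Real.exp (-(L * t)) * (‖x‖ + ‖∫ s in 0..(t : ℝ), F s (expWeightedCurve L η s)‖) := by
        rw [expWeightedPicard, norm_smul, Real.norm_of_nonneg (Real.exp_nonneg _)]
        gcongr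
        exact norm_add_le _ _
    _ ≤ ‖x‖ + (C + K * ‖η‖) / L := by
        rw [mul_add]
        exact add_le_add (mul_le_of_le_one_left (norm_nonneg x) hexp)
          (exp_neg_mul_norm_integral_le hL t.coe_nonneg (by positivity) hbound)

lemma dist_expWeightedPicard_le (hF : IsCaratheodory F C K) (hL : 0 < L) (x : E)
    (η ζ : BoundedContinuousFunction NNReal E) (t : NNReal) :
    dist (expWeightedPicard F L x η t) (expWeightedPicard F L x ζ t) ≤ K * dist η ζ / L := by
  have hint (η : BoundedContinuousFunction NNReal E) :=
    hF.intervalIntegrable (continuous_expWeightedCurve L η) le_rfl t.coe_nonneg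
  rw [dist_eq_norm, expWeightedPicard, expWeightedPicard, ← smul_sub, add_sub_add_left_eq_sub,
    norm_smul, Real.norm_of_nonneg (Real.exp_nonneg _),
    ← intervalIntegral.integral_sub (hint η) (hint ζ)]
  refine exp_neg_mul_norm_integral_le hL t.coe_nonneg (by positivity) fun s hs => ?_
  rw [mul_assoc]
  exact (hF.norm_sub_le hs _ _).trans
    (mul_le_mul_of_nonneg_left (norm_expWeightedCurve_sub_le L η ζ s) K.coe_nonneg)

theorem exists_isIntegralSolution [CompleteSpace E] (hF : IsCaratheodory F C K) (x : E) :
    ∃ ξ, IsIntegralSolution F x ξ := by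
  set L : NNReal := K + 1
  have hL : (0 : ℝ) < L := by positivity
  let Φ (η : BoundedContinuousFunction NNReal E) : BoundedContinuousFunction NNReal E :=
    .ofNormedAddCommGroup _ (hF.continuous_expWeightedPicard L x η) _
      (hF.norm_expWeightedPicard_le hL x η)
  have hΦ : ContractingWith (K / L) Φ := by
    refine ⟨(div_lt_one (by positivity)).2 (lt_add_one K), .of_dist_le_mul fun η ζ => ?_⟩
    rw [NNReal.coe_div, div_mul_eq_mul_div]
    exact (BoundedContinuousFunction.dist_le (by positivity)).2
      (hF.dist_expWeightedPicard_le hL x η ζ)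
  obtain ⟨η, hη, -⟩ := hΦ.exists_fixedPoint 0 (edist_ne_top _ _)
  refine ⟨expWeightedCurve L η, continuous_expWeightedCurve L η, fun t ht => ?_⟩
  have hηt : η t.toNNReal = expWeightedPicard F L x η t.toNNReal := DFunLike.congr_fun hη.symm _
  rw [expWeightedCurve, hηt, expWeightedPicard, Real.coe_toNNReal t ht, smul_smul, ← Real.exp_add,
    add_neg_cancel, Real.exp_zero, one_smul]

end IsCaratheodory

namespace IsIntegralSolution

variable {F : ℝ → E → E} {C K : NNReal} {x y : E} {ξ η ζ : ℝ → E} {h s t T : ℝ}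

lemma zero (hξ : IsIntegralSolution F x ξ) : ξ 0 = x := by
  simpa using hξ.2 0 le_rfl

lemma sub_eq_integral (hF : IsCaratheodory F C K) (hξ : IsIntegralSolution F x ξ) (hs : 0 ≤ s)
    (ht : 0 ≤ t) : ξ t - ξ s = ∫ τ in s..t, F τ (ξ τ) := by
  rw [hξ.2 t ht, hξ.2 s hs, add_sub_add_left_eq_sub, intervalIntegral.integral_interval_sub_left
    (hF.intervalIntegrable hξ.1 le_rfl ht) (hF.intervalIntegrable hξ.1 le_rfl hs)]

lemma norm_sub_le_mul_exp (hF : IsCaratheodory F C K) (hξ : IsIntegralSolution F x ξ)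
    (hη : IsIntegralSolution F y η) (ht : 0 ≤ t) :
    ‖ξ t - η t‖ ≤ ‖x - y‖ * Real.exp (K * t) := by
  have hc : Continuous fun t => ‖ξ t - η t‖ := (hξ.1.sub hη.1).norm
  refine le_mul_exp_of_le_add_integral hc K.coe_nonneg (fun τ hτ => ?_) t ⟨ht, le_rfl⟩
  have hsub : ξ τ - η τ = (x - y) + ∫ s in 0..τ, (F s (ξ s) - F s (η s)) := by
    rw [intervalIntegral.integral_sub (hF.intervalIntegrable hξ.1 le_rfl hτ.1)
      (hF.intervalIntegrable hη.1 le_rfl hτ.1), hξ.2 τ hτ.1, hη.2 τ hτ.1, add_sub_add_comm]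
  rw [hsub, ← intervalIntegral.integral_const_mul]
  exact (norm_add_le _ _).trans <| add_le_add_right
    (intervalIntegral.norm_integral_le_of_norm_le hτ.1
      (.of_forall fun s hs => hF.norm_sub_le hs.1.le _ _)
      ((hc.const_mul _).intervalIntegrable _ _)) _

lemma norm_le_mul_exp (hF : IsCaratheodory F C K) (hξ : IsIntegralSolution F x ξ)
    (ht : t ∈ Icc 0 T) : ‖ξ t‖ ≤ (‖x‖ + C * T) * Real.exp (K * t) := by
  have hc : Continuous fun t => ‖ξ t‖ := hξ.1.norm
  refine le_mul_exp_of_le_add_integral hc K.coe_nonneg (fun τ hτ => ?_) t ht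
  have hint : ‖∫ s in 0..τ, F s (ξ s)‖ ≤ ∫ s in 0..τ, (C + K * ‖ξ s‖) :=
    intervalIntegral.norm_integral_le_of_norm_le hτ.1
      (.of_forall fun s hs => hF.norm_le hs.1.le _)
      ((continuous_const.add (hc.const_mul _)).intervalIntegrable _ _)
  rw [intervalIntegral.integral_add (continuous_const.intervalIntegrable _ _)
    ((hc.const_mul _).intervalIntegrable _ _), intervalIntegral.integral_const_mul,
    intervalIntegral.integral_const, sub_zero, smul_eq_mul, mul_comm τ] at hint
  have hCτ : (C : ℝ) * τ ≤ C * T := mul_le_mul_of_nonneg_left hτ.2 C.coe_nonneg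
  rw [hξ.2 τ hτ.1]
  linarith [norm_add_le x (∫ s in 0..τ, F s (ξ s))]

lemma norm_sub_le_mul (hF : IsCaratheodory F C K) (hξ : IsIntegralSolution F x ξ) (hs : 0 ≤ s)
    (hst : s ≤ t) {M : ℝ} (hM : ∀ τ ∈ Ioc s t, ‖F τ (ξ τ)‖ ≤ M) :
    ‖ξ t - ξ s‖ ≤ M * (t - s) := by
  rw [hξ.sub_eq_integral hF hs (hs.trans hst), ← abs_of_nonneg (sub_nonneg.2 hst)]
  exact intervalIntegral.norm_integral_le_of_norm_le_const (by rwa [uIoc_of_le hst])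

lemma shift (hF : IsCaratheodory F C K) (hξ : IsIntegralSolution F x ξ) (hh : 0 ≤ h) :
    IsIntegralSolution (fun t => F (h + t)) (ξ h) (fun t => ξ (h + t)) := by
  refine ⟨hξ.1.comp (continuous_const.add continuous_id), fun t ht => ?_⟩
  rw [intervalIntegral.integral_comp_add_left (fun τ => F τ (ξ τ)) h, add_zero,
    ← hξ.sub_eq_integral hF hh (add_nonneg hh ht), add_sub_cancel]

lemma congr {G : ℝ → E → E} (hξ : IsIntegralSolution F x ξ) (hη : Continuous η)
    (hηξ : ∀ t, 0 ≤ t → η t = ξ t) (hGF : ∀ t, 0 < t → G t = F t) : IsIntegralSolution G x η := by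
  refine ⟨hη, fun t ht => ?_⟩
  have hint : ∫ s in 0..t, G s (η s) = ∫ s in 0..t, F s (ξ s) := by
    refine intervalIntegral.integral_congr_ae (.of_forall fun s hs => ?_)
    have hs : 0 < s := by rw [uIoc_of_le ht] at hs; exact hs.1
    rw [hηξ s hs.le, hGF s hs]
  rw [hηξ t ht, hint, hξ.2 t ht]

lemma of_shift (hF : IsCaratheodory F C K) (hξ : Continuous ξ)
    (hleft : ∀ t ∈ Icc 0 h, ξ t = x + ∫ s in 0..t, F s (ξ s)) (hh : 0 ≤ h)
    (hright : IsIntegralSolution (fun t => F (h + t)) (ξ h) (fun t => ξ (h + t))) :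
    IsIntegralSolution F x ξ := by
  refine ⟨hξ, fun t ht => ?_⟩
  rcases le_total t h with hth | hth
  · exact hleft t ⟨ht, hth⟩
  · have htail := hright.2 (t - h) (sub_nonneg.2 hth)
    simp only [intervalIntegral.integral_comp_add_left (fun τ => F τ (ξ τ)) h, add_zero,
      add_sub_cancel] at htail
    rw [htail, hleft h ⟨hh, le_rfl⟩, add_assoc, intervalIntegral.integral_add_adjacent_intervals
      (hF.intervalIntegrable hξ le_rfl hh) (hF.intervalIntegrable hξ hh ht)]

end IsIntegralSolution

end Caratheodory

/-! ### Hamiltonians and viscosity solutions -/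

section ControlSystem

variable {E W : Type*} [NormedAddCommGroup E]

/-- The standing assumptions on a control system `ξ' = f(ξ, u)`, `u ∈ U`: joint continuity,
Lipschitz continuity in space and boundedness at the origin, both uniform in the control. -/
structure IsLipschitzControlSystem [TopologicalSpace W] (f : E → W → E) (U : Set W)
    (C K : NNReal) : Prop where
  nonempty : U.Nonempty
  continuousOn : ContinuousOn (Function.uncurry f) (univ ×ˢ U)
  lipschitzWith : ∀ u ∈ U, LipschitzWith K (f · u)
  norm_zero_le : ∀ u ∈ U, ‖f 0 u‖ ≤ C

lemma exists_isLipschitzControlSystem_of_isCompact [PseudoMetricSpace W] {f : E → W → E}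
    {U : Set W} {K : NNReal} (hU : IsCompact U) (hUne : U.Nonempty)
    (hf : LipschitzOnWith K (Function.uncurry f) (univ ×ˢ U)) :
    ∃ C, IsLipschitzControlSystem f U C K := by
  have hf0 : ContinuousOn (f 0) U :=
    hf.continuousOn.comp (continuousOn_const.prodMk continuousOn_id) fun _ hu => ⟨mem_univ _, hu⟩
  obtain ⟨C, hC⟩ := hU.exists_bound_of_continuousOn hf0
  refine ⟨C.toNNReal, hUne, hf.continuousOn, fun u hu => .of_dist_le_mul fun x y => ?_,
    fun u hu => (hC u hu).trans (Real.le_coe_toNNReal C)⟩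
  simpa [Prod.dist_eq] using hf.dist_le_mul (x, u) ⟨mem_univ _, hu⟩ (y, u) ⟨mem_univ _, hu⟩

namespace IsLipschitzControlSystem

variable [TopologicalSpace W] {f : E → W → E} {U : Set W} {C K : NNReal}

lemma norm_sub_le (hS : IsLipschitzControlSystem f U C K) {u : W} (hu : u ∈ U) (x y : E) :
    ‖f x u - f y u‖ ≤ K * ‖x - y‖ := by
  simpa only [dist_eq_norm] using (hS.lipschitzWith u hu).dist_le_mul x y

theorem isCaratheodory [MeasurableSpace E] [BorelSpace E] [SecondCountableTopology E]
    [MeasurableSpace W] [BorelSpace W] [SecondCountableTopology W]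
    (hS : IsLipschitzControlSystem f U C K) {u : ℝ → W} (hu : Measurable u)
    (huU : ∀ t, 0 ≤ t → u t ∈ U) : IsCaratheodory (fun t x => f x (u t)) C K where
  lipschitzWith t ht := hS.lipschitzWith _ (huU t ht)
  norm_zero_le t ht := hS.norm_zero_le _ (huU t ht)
  aestronglyMeasurable η hη := by
    -- `f` is only continuous on `univ ×ˢ U`, so the control must take values in `U` at all times.
    let γ (t : ℝ) : (univ : Set E) ×ˢ U :=
      ⟨(η t, u (max t 0)), mem_univ _, huU _ (le_max_right t 0)⟩
    have hγ : Measurable γ :=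
      (hη.measurable.prodMk (hu.comp (measurable_id.max measurable_const))).subtype_mk
    have hfγ := hS.continuousOn.domRestrict.measurable.comp hγ
    refine hfγ.aestronglyMeasurable.congr ?_
    exact (ae_restrict_iff' measurableSet_Ici).2
      (.of_forall fun t (ht : 0 ≤ t) => by simp [γ, max_eq_left ht])

end IsLipschitzControlSystem

variable [NormedSpace ℝ E]

/-- The Hamiltonian `H(x, A) = sup_{u ∈ U} A (f(x, u))`, without the zeroth-order term `α(r)` of
`H_α`; the momentum `A` is a continuous linear functional, to be fed with spatial derivatives. -/
def hamiltonian (f : E → W → E) (U : Set W) (x : E) (A : E →L[ℝ] ℝ) : ℝ :=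
  sSup ((fun u => A (f x u)) '' U)

namespace IsLipschitzControlSystem

variable [TopologicalSpace W] {f : E → W → E} {U : Set W} {C K : NNReal}

lemma apply_le (hS : IsLipschitzControlSystem f U C K) {u : W} (hu : u ∈ U) (x : E)
    (A : E →L[ℝ] ℝ) : A (f x u) ≤ ‖A‖ * (C + K * ‖x‖) := by
  have hf : ‖f x u‖ ≤ C + K * ‖x‖ :=
    calc ‖f x u‖ = ‖f 0 u + (f x u - f 0 u)‖ := by rw [add_sub_cancel]
      _ ≤ ‖f 0 u‖ + ‖f x u - f 0 u‖ := norm_add_le _ _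
      _ ≤ C + K * ‖x‖ := by
        simpa using add_le_add (hS.norm_zero_le u hu) (hS.norm_sub_le hu x 0)
  exact (le_abs_self _).trans ((A.le_opNorm _).trans (by gcongr))

lemma le_hamiltonian (hS : IsLipschitzControlSystem f U C K) {u : W} (hu : u ∈ U) (x : E)
    (A : E →L[ℝ] ℝ) : A (f x u) ≤ hamiltonian f U x A :=
  le_csSup ⟨_, forall_mem_image.2 fun _ hu => hS.apply_le hu x A⟩ (mem_image_of_mem _ hu)

lemma hamiltonian_le (hS : IsLipschitzControlSystem f U C K) {x : E} {A : E →L[ℝ] ℝ} {c : ℝ}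
    (hc : ∀ u ∈ U, A (f x u) ≤ c) : hamiltonian f U x A ≤ c :=
  csSup_le (hS.nonempty.image _) (forall_mem_image.2 hc)

lemma hamiltonian_le_norm (hS : IsLipschitzControlSystem f U C K) (x : E) (A : E →L[ℝ] ℝ) :
    hamiltonian f U x A ≤ ‖A‖ * (C + K * ‖x‖) :=
  hS.hamiltonian_le fun _ hu => hS.apply_le hu x A

lemma hamiltonian_add_le (hS : IsLipschitzControlSystem f U C K) (x : E) (A B : E →L[ℝ] ℝ) :
    hamiltonian f U x (A + B) ≤ hamiltonian f U x A + hamiltonian f U x B :=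
  hS.hamiltonian_le fun _ hu =>
    add_le_add (hS.le_hamiltonian hu x A) (hS.le_hamiltonian hu x B)

lemma hamiltonian_smul_le (hS : IsLipschitzControlSystem f U C K) (x : E) (A : E →L[ℝ] ℝ) {c : ℝ}
    (hc : 0 ≤ c) : hamiltonian f U x (c • A) ≤ c * hamiltonian f U x A :=
  hS.hamiltonian_le fun _ hu => mul_le_mul_of_nonneg_left (hS.le_hamiltonian hu x A) hc

lemma hamiltonian_le_add_norm_sub (hS : IsLipschitzControlSystem f U C K) (x y : E)
    (A : E →L[ℝ] ℝ) :
    hamiltonian f U x A ≤ hamiltonian f U y A + ‖A‖ * (K * ‖x - y‖) :=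
  hS.hamiltonian_le fun u hu =>
    calc A (f x u) = A (f y u) + A (f x u - f y u) := by rw [map_sub, add_sub_cancel]
      _ ≤ hamiltonian f U y A + ‖A‖ * ‖f x u - f y u‖ :=
        add_le_add (hS.le_hamiltonian hu y A) ((le_abs_self _).trans (A.le_opNorm _))
      _ ≤ hamiltonian f U y A + ‖A‖ * (K * ‖x - y‖) := by gcongr; exact hS.norm_sub_le hu x y

theorem continuous_hamiltonian (hS : IsLipschitzControlSystem f U C K) :
    Continuous fun P : E × (E →L[ℝ] ℝ) => hamiltonian f U P.1 P.2 := by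
  have hle (P Q : E × (E →L[ℝ] ℝ)) : hamiltonian f U P.1 P.2 - hamiltonian f U Q.1 Q.2 ≤
      ‖P.2‖ * (K * ‖P.1 - Q.1‖) + ‖P.2 - Q.2‖ * (C + K * ‖Q.1‖) := by
    have hadd := hS.hamiltonian_add_le Q.1 Q.2 (P.2 - Q.2)
    rw [add_sub_cancel] at hadd
    linarith [hS.hamiltonian_le_add_norm_sub P.1 Q.1 P.2, hS.hamiltonian_le_norm Q.1 (P.2 - Q.2)]
  refine continuous_iff_continuousAt.2 fun Q => tendsto_iff_dist_tendsto_zero.2 ?_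
  have hbound : Continuous fun P : E × (E →L[ℝ] ℝ) =>
      max (‖P.2‖ * (K * ‖P.1 - Q.1‖) + ‖P.2 - Q.2‖ * (C + K * ‖Q.1‖))
        (‖Q.2‖ * (K * ‖Q.1 - P.1‖) + ‖Q.2 - P.2‖ * (C + K * ‖P.1‖)) := by
    fun_prop
  refine squeeze_zero (fun _ => dist_nonneg) (fun P => ?_) (by simpa using hbound.tendsto Q)
  rw [Real.dist_eq, abs_le']
  exact ⟨(hle P Q).trans (le_max_left _ _),
    (neg_sub _ _).trans_le ((hle Q P).trans (le_max_right _ _))⟩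

end IsLipschitzControlSystem

end ControlSystem

section Viscosity

variable {E W : Type*} [NormedAddCommGroup E] [NormedSpace ℝ E]

/-- The spatial derivative `∇φ(x, T)` at `p = (x, T)`, as a linear functional on `E`. -/
def spaceDeriv (φ : E × ℝ → ℝ) (p : E × ℝ) : E →L[ℝ] ℝ :=
  (fderiv ℝ φ p).comp (.inl ℝ E ℝ)

/-- The time derivative `∂_T φ(x, T)` at `p = (x, T)`. -/
def timeDeriv (φ : E × ℝ → ℝ) (p : E × ℝ) : ℝ :=
  fderiv ℝ φ p (0, 1)

lemma spaceDeriv_eq_of_hasFDerivAt {φ : E × ℝ → ℝ} {φ' : E × ℝ →L[ℝ] ℝ} {p : E × ℝ}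
    (h : HasFDerivAt φ φ' p) : spaceDeriv φ p = φ'.comp (.inl ℝ E ℝ) := by
  rw [spaceDeriv, h.fderiv]

lemma timeDeriv_eq_of_hasFDerivAt {φ : E × ℝ → ℝ} {φ' : E × ℝ →L[ℝ] ℝ} {p : E × ℝ}
    (h : HasFDerivAt φ φ' p) : timeDeriv φ p = φ' (0, 1) := by
  rw [timeDeriv, h.fderiv]

lemma fderiv_apply_eq (φ : E × ℝ → ℝ) (p : E × ℝ) (y : E) (τ : ℝ) :
    fderiv ℝ φ p (y, τ) = spaceDeriv φ p y + timeDeriv φ p * τ := by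
  have hsplit : (y, τ) = (y, 0) + τ • ((0, 1) : E × ℝ) := by simp
  rw [hsplit, map_add, map_smul, smul_eq_mul, mul_comm]
  rfl

/-- `w` is a viscosity sub-solution of `max {∂_T w - H_α(x, w, ∇w), w - g} = 0` for `T > 0`, with
the obstacle condition `w ≤ g` separated from the test-function inequality. -/
def IsViscositySubsolution (f : E → W → E) (U : Set W) (α : ℝ → ℝ) (g : E → ℝ)
    (w : E × ℝ → ℝ) : Prop :=
  ∀ p : E × ℝ, 0 < p.2 → ∀ φ : E × ℝ → ℝ, ContDiff ℝ 1 φ → IsLocalMax (fun q => w q - φ q) p →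
    timeDeriv φ p ≤ hamiltonian f U p.1 (spaceDeriv φ p) + α (w p) ∧ w p ≤ g p.1

/-- `w` is a viscosity super-solution of `max {∂_T w - H_α(x, w, ∇w), w - g} = 0` for `T > 0`. -/
def IsViscositySupersolution (f : E → W → E) (U : Set W) (α : ℝ → ℝ) (g : E → ℝ)
    (w : E × ℝ → ℝ) : Prop :=
  ∀ p : E × ℝ, 0 < p.2 → ∀ φ : E × ℝ → ℝ, ContDiff ℝ 1 φ → IsLocalMin (fun q => w q - φ q) p →
    hamiltonian f U p.1 (spaceDeriv φ p) + α (w p) ≤ timeDeriv φ p ∨ g p.1 ≤ w p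

end Viscosity

lemma isViscositySolnCBVF_iff {n m : ℕ} {f : (Fin n → ℝ) → (Fin m → ℝ) → Fin n → ℝ}
    {U : Set (Fin m → ℝ)} {α : ℝ → ℝ} {g : (Fin n → ℝ) → ℝ} {w : (Fin n → ℝ) × ℝ → ℝ} :
    IsViscositySolnCBVF f U α g w ↔
      IsViscositySubsolution f U α g w ∧ IsViscositySupersolution f U α g w := by
  simp only [IsViscositySolnCBVF, max_le_iff, le_max_iff, sub_nonpos, sub_nonneg]
  rfl

/-! ### Doubling of variables -/

section EuclideanSq

variable {E : Type*} [NormedAddCommGroup E] [NormedSpace ℝ E] [FiniteDimensional ℝ E]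

/-- The squared norm of a Euclidean structure on the finite-dimensional space `E`; unlike
`‖x‖ ^ 2` it is smooth. It is the penalty in the doubling of variables. -/
def euclideanSq (x : E) : ℝ :=
  ‖toEuclidean x‖ ^ 2

lemma contDiff_euclideanSq : ContDiff ℝ 1 (euclideanSq : E → ℝ) :=
  (toEuclidean (E := E)).contDiff.norm_sq ℝ

lemma euclideanSq_nonneg (x : E) : 0 ≤ euclideanSq x :=
  sq_nonneg _

@[simp]
lemma euclideanSq_eq_zero {x : E} : euclideanSq x = 0 ↔ x = 0 := by
  simp [euclideanSq]

@[simp]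
lemma euclideanSq_zero : euclideanSq (0 : E) = 0 :=
  euclideanSq_eq_zero.2 rfl

lemma hasFDerivAt_euclideanSq (x : E) :
    HasFDerivAt euclideanSq (fderiv ℝ euclideanSq x) x :=
  (contDiff_euclideanSq.differentiable one_ne_zero x).hasFDerivAt

lemma hasFDerivAt_euclideanSq_sub_const (x y : E) :
    HasFDerivAt (fun x => euclideanSq (x - y)) (fderiv ℝ euclideanSq (x - y)) x :=
  HasFDerivAt.comp (g := euclideanSq) x (hasFDerivAt_euclideanSq (x - y))
    ((hasFDerivAt_id x).sub_const y)

lemma hasFDerivAt_euclideanSq_const_sub (x y : E) :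
    HasFDerivAt (fun y => euclideanSq (x - y)) (-fderiv ℝ euclideanSq (x - y)) y :=
  (HasFDerivAt.comp (g := euclideanSq) y (hasFDerivAt_euclideanSq (x - y))
    ((hasFDerivAt_id y).const_sub x)).congr_fderiv (by ext; simp)

@[simp]
lemma fderiv_euclideanSq_zero : fderiv ℝ (euclideanSq : E → ℝ) 0 = 0 :=
  IsLocalMin.fderiv_eq_zero (.of_forall fun x => by simpa using euclideanSq_nonneg x)

lemma norm_fderiv_euclideanSq_le (x : E) :
    ‖fderiv ℝ euclideanSq x‖ ≤
      2 * ‖(toEuclidean : E ≃L[ℝ] _).toContinuousLinearMap‖ * ‖toEuclidean x‖ := by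
  set L := (toEuclidean : E ≃L[ℝ] _).toContinuousLinearMap
  have h : HasFDerivAt euclideanSq (2 • (innerSL ℝ (L x)).comp L) x :=
    L.hasFDerivAt.norm_sq
  rw [h.fderiv]
  calc ‖2 • (innerSL ℝ (L x)).comp L‖ ≤ 2 * ‖(innerSL ℝ (L x)).comp L‖ := by
        simpa using norm_nsmul_le (n := 2) (a := (innerSL ℝ (L x)).comp L)
    _ ≤ 2 * (‖L x‖ * ‖L‖) := by
        gcongr; simpa using (innerSL ℝ (L x)).opNorm_comp_le L
    _ = 2 * ‖L‖ * ‖L x‖ := by ring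

lemma exists_norm_fderiv_euclideanSq_le : ∃ κ : ℝ, 0 ≤ κ ∧ ∀ x : E,
    ‖fderiv ℝ euclideanSq x‖ ≤ κ * (1 + euclideanSq x) ∧
      ‖fderiv ℝ euclideanSq x‖ * ‖x‖ ≤ κ * euclideanSq x := by
  set L := (toEuclidean : E ≃L[ℝ] _).toContinuousLinearMap
  set L' := (toEuclidean : E ≃L[ℝ] _).symm.toContinuousLinearMap
  refine ⟨2 * ‖L‖ * (1 + ‖L'‖), by positivity, fun x => ⟨?_, ?_⟩⟩
  · calc ‖fderiv ℝ euclideanSq x‖ ≤ 2 * ‖L‖ * ‖toEuclidean x‖ := norm_fderiv_euclideanSq_le x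
      _ ≤ 2 * ‖L‖ * (1 + euclideanSq x) := by
        gcongr
        rw [euclideanSq]
        nlinarith [sq_nonneg (‖toEuclidean x‖ - 1)]
      _ ≤ 2 * ‖L‖ * (1 + ‖L'‖) * (1 + euclideanSq x) := by
        have := euclideanSq_nonneg x
        gcongr ?_ * _
        exact le_mul_of_one_le_right (by positivity) (by simp)
  · have hx : ‖x‖ ≤ ‖L'‖ * ‖toEuclidean x‖ := by
      simpa [L'] using L'.le_opNorm (toEuclidean x)
    calc ‖fderiv ℝ euclideanSq x‖ * ‖x‖
        ≤ 2 * ‖L‖ * ‖toEuclidean x‖ * (‖L'‖ * ‖toEuclidean x‖) := by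
          gcongr; exact norm_fderiv_euclideanSq_le x
      _ = 2 * ‖L‖ * ‖L'‖ * euclideanSq x := by rw [euclideanSq]; ring
      _ ≤ 2 * ‖L‖ * (1 + ‖L'‖) * euclideanSq x := by
        have := euclideanSq_nonneg x
        gcongr
        exact le_add_of_nonneg_left zero_le_one

end EuclideanSq

lemma tendsto_of_isMaxOn_sub_mul {X : Type*} [TopologicalSpace X] {D : Set X} (hD : IsCompact D)
    {Φ d : X → ℝ} (hΦ : ContinuousOn Φ D) (hd : ContinuousOn d D) (hd0 : ∀ x ∈ D, 0 ≤ d x)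
    {z : X} (hz : z ∈ D) (hdz : d z = 0) (huniq : ∀ x ∈ D, d x = 0 → Φ z ≤ Φ x → x = z)
    {y : ℕ → X} (hy : ∀ j, y j ∈ D) (hmax : ∀ j : ℕ, IsMaxOn (fun x => Φ x - j * d x) D (y j)) :
    Tendsto y atTop (𝓝 z) ∧ Tendsto (fun j : ℕ => j * d (y j)) atTop (𝓝 0) := by
  have hgain (j : ℕ) : j * d (y j) ≤ Φ (y j) - Φ z := by
    have : Φ z - j * d z ≤ Φ (y j) - j * d (y j) := hmax j hz
    rw [hdz] at this
    linarith
  have hpen (j : ℕ) : 0 ≤ j * d (y j) := mul_nonneg j.cast_nonneg (hd0 _ (hy j))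
  obtain ⟨M, hM⟩ := hD.bddAbove_image hΦ
  have hdy : Tendsto (fun j => d (y j)) atTop (𝓝 0) := by
    refine squeeze_zero' (.of_forall fun j => hd0 _ (hy j)) ?_
      (tendsto_const_div_atTop_nhds_zero_nat (M - Φ z))
    filter_upwards [eventually_gt_atTop 0] with j hj
    rw [le_div_iff₀ (by exact_mod_cast hj), mul_comm]
    linarith [hgain j, hM (mem_image_of_mem Φ (hy j))]
  have hyz : Tendsto y atTop (𝓝 z) := by
    refine hD.tendsto_nhds_of_unique_mapClusterPt (.of_forall hy) fun x hx hclus => ?_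
    obtain ⟨𝒰, h𝒰, h𝒰x⟩ := mapClusterPt_iff_ultrafilter.1 hclus
    have h𝒰D : Tendsto y 𝒰 (𝓝[D] x) :=
      tendsto_nhdsWithin_iff.2 ⟨h𝒰x, .of_forall hy⟩
    refine huniq x hx (tendsto_nhds_unique ((hd x hx).tendsto.comp h𝒰D) (hdy.mono_left h𝒰)) ?_
    exact ge_of_tendsto ((hΦ x hx).tendsto.comp h𝒰D)
      (.of_forall fun j => by simpa using (hpen j).trans (hgain j))
  have hΦy : Tendsto (fun j => Φ (y j) - Φ z) atTop (𝓝 0) := by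
    simpa using ((hΦ z hz).tendsto.comp
      (tendsto_nhdsWithin_iff.2 ⟨hyz, .of_forall hy⟩)).sub_const (Φ z)
  exact ⟨hyz, squeeze_zero hpen hgain hΦy⟩

section Comparison

variable {E W : Type*} [NormedAddCommGroup E] [NormedSpace ℝ E]

lemma norm_comp_inl_le (A : E × ℝ →L[ℝ] ℝ) : ‖A.comp (.inl ℝ E ℝ)‖ ≤ ‖A‖ :=
  (A.comp _).opNorm_le_bound (norm_nonneg A) fun x => by
    simpa [Prod.norm_def] using A.le_opNorm (x, 0)

lemma norm_smul_comp_inl_mul_le {A : E × ℝ →L[ℝ] ℝ} {p : E × ℝ} {N L M : ℝ} (hN : 0 ≤ N)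
    (hL : 0 ≤ L) (hA : ‖A‖ * ‖p‖ ≤ M) : ‖N • A.comp (.inl ℝ E ℝ)‖ * (L * ‖p.1‖) ≤ L * N * M :=
  calc ‖N • A.comp (.inl ℝ E ℝ)‖ * (L * ‖p.1‖) ≤ N * ‖A‖ * (L * ‖p‖) := by
        rw [norm_smul, Real.norm_of_nonneg hN]
        gcongr
        exacts [norm_comp_inl_le A, norm_fst_le p]
    _ = L * N * (‖A‖ * ‖p‖) := by ring
    _ ≤ L * N * M := by gcongr

variable [FiniteDimensional ℝ E] [TopologicalSpace W] {f : E → W → E} {U : Set W} {C K : NNReal}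
  {α : ℝ → ℝ} {g : E → ℝ} {w₁ w₂ ψ : E × ℝ → ℝ} {z : E × ℝ}

/-- The doubled difference of `w₁` and `w₂` whose maxima are compared in the doubling of
variables. -/
def doubledDifference (w₁ w₂ ψ : E × ℝ → ℝ) (N : ℝ) (P : (E × ℝ) × (E × ℝ)) : ℝ :=
  w₁ P.1 - w₂ P.2 - ψ P.1 - N * euclideanSq (P.1 - P.2)

lemma timeDeriv_le_of_isLocalMax_doubledDifference (hS : IsLipschitzControlSystem f U C K)
    (hw₁ : IsViscositySubsolution f U α g w₁) (hw₂ : IsViscositySupersolution f U α g w₂)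
    (hψ : ContDiff ℝ 1 ψ) {N κ : ℝ} (hN : 0 ≤ N)
    (hκ : ∀ p : E × ℝ, ‖fderiv ℝ euclideanSq p‖ * ‖p‖ ≤ κ * euclideanSq p) {a b : E × ℝ}
    (ha : 0 < a.2) (hb : 0 < b.2) (hmax : IsLocalMax (doubledDifference w₁ w₂ ψ N) (a, b)) :
    w₁ a ≤ g a.1 ∧ (w₂ b < g b.1 → timeDeriv ψ a ≤ hamiltonian f U a.1 (spaceDeriv ψ a) +
      (α (w₁ a) - α (w₂ b)) + K * κ * (N * euclideanSq (a - b))) := by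
  set A := fderiv ℝ euclideanSq (a - b)
  set B := N • A.comp (.inl ℝ E ℝ)
  have hsq : ContDiff ℝ 1 (euclideanSq : E × ℝ → ℝ) := contDiff_euclideanSq
  have hφ₁ : HasFDerivAt (fun x => ψ x + N * euclideanSq (x - b)) (fderiv ℝ ψ a + N • A) a :=
    (hψ.differentiable one_ne_zero a).hasFDerivAt.add
      ((hasFDerivAt_euclideanSq_sub_const a b).const_mul N)
  have hφ₂ : HasFDerivAt (fun y => -(N * euclideanSq (a - y))) (N • A) b :=
    ((hasFDerivAt_euclideanSq_const_sub a b).const_mul N).fun_neg.congr_fderiv (by simp [A])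
  obtain ⟨hsub, hobst⟩ := hw₁ a ha (fun x => ψ x + N * euclideanSq (x - b)) (by fun_prop) <| by
    filter_upwards [(Continuous.prodMk_left b).continuousAt.eventually hmax] with x hx
    change w₁ x - (ψ x + N * euclideanSq (x - b)) ≤ w₁ a - (ψ a + N * euclideanSq (a - b))
    simp only [doubledDifference] at hx
    linarith
  refine ⟨hobst, fun hgap => ?_⟩
  have hsuper := (hw₂ b hb (fun y => -(N * euclideanSq (a - y))) (by fun_prop) <| by
    filter_upwards [(Continuous.prodMk_right a).continuousAt.eventually hmax] with y hy
    change w₂ b - -(N * euclideanSq (a - b)) ≤ w₂ y - -(N * euclideanSq (a - y))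
    simp only [doubledDifference] at hy
    linarith).resolve_right hgap.not_ge
  rw [timeDeriv_eq_of_hasFDerivAt hφ₁, spaceDeriv_eq_of_hasFDerivAt hφ₁] at hsub
  rw [timeDeriv_eq_of_hasFDerivAt hφ₂, spaceDeriv_eq_of_hasFDerivAt hφ₂] at hsuper
  have hpen : ‖B‖ * (K * ‖a.1 - b.1‖) ≤ K * N * (κ * euclideanSq (a - b)) :=
    norm_smul_comp_inl_mul_le hN K.coe_nonneg (hκ (a - b))
  calc timeDeriv ψ a
      ≤ hamiltonian f U a.1 (spaceDeriv ψ a + B) + α (w₁ a) - (N • A) (0, 1) :=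
        le_sub_iff_add_le.2 hsub
    _ ≤ hamiltonian f U a.1 (spaceDeriv ψ a) + hamiltonian f U b.1 B
          + K * κ * (N * euclideanSq (a - b)) + α (w₁ a) - (N • A) (0, 1) := by
        linarith [hS.hamiltonian_add_le a.1 (spaceDeriv ψ a) B,
          hS.hamiltonian_le_add_norm_sub a.1 b.1 B, hpen]
    _ ≤ _ := by
        have : hamiltonian f U b.1 B + α (w₂ b) ≤ (N • A) (0, 1) := hsuper
        linarith

lemma exists_tendsto_isLocalMax_doubledDifference {s : Set (E × ℝ)} (hs : s ∈ 𝓝 z)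
    (hc₁ : ContinuousOn w₁ s) (hc₂ : ContinuousOn w₂ s) (hψ : Continuous ψ)
    (hmax : ∀ᶠ p in 𝓝 z, w₁ z - w₂ z - ψ z ≤ w₁ p - w₂ p - ψ p → p = z) :
    ∃ a b : ℕ → E × ℝ, Tendsto a atTop (𝓝 z) ∧ Tendsto b atTop (𝓝 z) ∧
      Tendsto (fun j : ℕ => j * euclideanSq (a j - b j)) atTop (𝓝 0) ∧
      ∀ᶠ j : ℕ in atTop, IsLocalMax (doubledDifference w₁ w₂ ψ j) (a j, b j) := by
  have : ProperSpace E := FiniteDimensional.proper ℝ E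
  obtain ⟨r, hr, hball⟩ := Metric.nhds_basis_closedBall.mem_iff.1 (inter_mem hs hmax)
  set D : Set ((E × ℝ) × (E × ℝ)) := Metric.closedBall z r ×ˢ Metric.closedBall z r
  have hD : IsCompact D := (isCompact_closedBall z r).prod (isCompact_closedBall z r)
  have hDz : D ∈ 𝓝 (z, z) :=
    prod_mem_nhds (Metric.closedBall_mem_nhds z hr) (Metric.closedBall_mem_nhds z hr)
  have hΦ : ContinuousOn (fun P : (E × ℝ) × (E × ℝ) => w₁ P.1 - w₂ P.2 - ψ P.1) D :=
    ((hc₁.comp continuousOn_fst fun P hP => (hball hP.1).1).sub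
      (hc₂.comp continuousOn_snd fun P hP => (hball hP.2).1)).sub
      (hψ.comp continuous_fst).continuousOn
  have hd : Continuous fun P : (E × ℝ) × (E × ℝ) => euclideanSq (P.1 - P.2) :=
    contDiff_euclideanSq.continuous.comp (continuous_fst.sub continuous_snd)
  choose y hyD hy using fun j : ℕ => hD.exists_isMaxOn (f := doubledDifference w₁ w₂ ψ j)
    ⟨(z, z), mem_of_mem_nhds hDz⟩ (hΦ.sub (continuous_const.mul hd).continuousOn)
  obtain ⟨hyz, hpen⟩ := tendsto_of_isMaxOn_sub_mul hD hΦ hd.continuousOn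
    (fun P _ => euclideanSq_nonneg _) (mem_of_mem_nhds hDz) (by simp)
    (fun P hP hPd hle => by
      have hdiag : P.1 = P.2 := sub_eq_zero.1 (euclideanSq_eq_zero.1 hPd)
      have hP₁ : P.1 = z := (hball hP.1).2 (by simpa [← hdiag] using hle)
      exact Prod.ext hP₁ (hdiag ▸ hP₁)) hyD hy
  refine ⟨fun j => (y j).1, fun j => (y j).2, (continuous_fst.tendsto _).comp hyz,
    (continuous_snd.tendsto _).comp hyz, hpen, ?_⟩
  filter_upwards [hyz.eventually (eventually_mem_nhds_iff.2 hDz)] with j hj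
  exact (hy j).isLocalMax hj

lemma timeDeriv_le_of_strictLocalMax_sub (hS : IsLipschitzControlSystem f U C K)
    (hα : ContinuousOn α (Ici 0)) (hg : Continuous g)
    (hw₁ : IsViscositySubsolution f U α g w₁) (hw₂ : IsViscositySupersolution f U α g w₂)
    (hc₁ : ContinuousOn w₁ {p | 0 ≤ p.2}) (hc₂ : ContinuousOn w₂ {p | 0 ≤ p.2})
    (hn₁ : ∀ p : E × ℝ, 0 ≤ p.2 → 0 ≤ w₁ p) (hn₂ : ∀ p : E × ℝ, 0 ≤ p.2 → 0 ≤ w₂ p)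
    (hψ : ContDiff ℝ 1 ψ) (hz : 0 < z.2) (hlt : w₂ z < w₁ z)
    (hmax : ∀ᶠ p in 𝓝 z, w₁ z - w₂ z - ψ z ≤ w₁ p - w₂ p - ψ p → p = z) :
    timeDeriv ψ z ≤ hamiltonian f U z.1 (spaceDeriv ψ z) + (α (w₁ z) - α (w₂ z)) := by
  obtain ⟨κ, -, hκ⟩ := exists_norm_fderiv_euclideanSq_le (E := E × ℝ)
  have hpos : ∀ᶠ p : E × ℝ in 𝓝 z, 0 < p.2 := continuous_snd.continuousAt.eventually_const_lt hz
  have hhalf : {p : E × ℝ | 0 ≤ p.2} ∈ 𝓝 z := hpos.mono fun _ => le_of_lt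
  obtain ⟨a, b, ha, hb, hpen, hab⟩ :=
    exists_tendsto_isLocalMax_doubledDifference hhalf hc₁ hc₂ hψ.continuous hmax
  have key := (hab.and ((ha.eventually hpos).and (hb.eventually hpos))).mono
    fun j ⟨hj, haj, hbj⟩ => timeDeriv_le_of_isLocalMax_doubledDifference hS hw₁ hw₂ hψ
      j.cast_nonneg (fun p => (hκ p).2) haj hbj hj
  have hw₁a := (hc₁.continuousAt hhalf).tendsto.comp ha
  have hw₂b := (hc₂.continuousAt hhalf).tendsto.comp hb
  have hgz : Tendsto (fun p : E × ℝ => g p.1) (𝓝 z) (𝓝 (g z.1)) :=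
    (hg.comp continuous_fst).tendsto z
  have hobst : w₁ z ≤ g z.1 :=
    le_of_tendsto_of_tendsto hw₁a (hgz.comp ha) (key.mono fun j hj => hj.1)
  have hαw {w : E × ℝ → ℝ} (hc : ContinuousOn w {p | 0 ≤ p.2})
      (hn : ∀ p : E × ℝ, 0 ≤ p.2 → 0 ≤ w p) : Tendsto (fun p => α (w p)) (𝓝 z) (𝓝 (α (w z))) :=
    ((hα.comp hc hn).continuousAt hhalf).tendsto
  have hDψ := hψ.continuous_fderiv one_ne_zero
  have htime : Continuous (timeDeriv ψ) := hDψ.clm_apply continuous_const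
  have hspace : Continuous (spaceDeriv ψ) := hDψ.clm_comp continuous_const
  have hH : Continuous fun p : E × ℝ => hamiltonian f U p.1 (spaceDeriv ψ p) :=
    hS.continuous_hamiltonian.comp (continuous_fst.prodMk hspace)
  refine le_of_tendsto_of_tendsto ((htime.tendsto z).comp ha) (b := atTop) ?_
    ((hw₂b.eventually_lt (hgz.comp hb) (hlt.trans_le hobst)).mp (key.mono fun j hj => hj.2))
  simpa using ((((hH.tendsto z).comp ha).add
    (((hαw hc₁ hn₁).comp ha).sub ((hαw hc₂ hn₂).comp hb))).add (hpen.const_mul (K * κ)))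

theorem timeDeriv_le_of_isLocalMax_sub (hS : IsLipschitzControlSystem f U C K)
    (hα : ContinuousOn α (Ici 0)) (hg : Continuous g)
    (hw₁ : IsViscositySubsolution f U α g w₁) (hw₂ : IsViscositySupersolution f U α g w₂)
    (hc₁ : ContinuousOn w₁ {p | 0 ≤ p.2}) (hc₂ : ContinuousOn w₂ {p | 0 ≤ p.2})
    (hn₁ : ∀ p : E × ℝ, 0 ≤ p.2 → 0 ≤ w₁ p) (hn₂ : ∀ p : E × ℝ, 0 ≤ p.2 → 0 ≤ w₂ p)
    (hψ : ContDiff ℝ 1 ψ) (hz : 0 < z.2) (hlt : w₂ z < w₁ z)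
    (hmax : IsLocalMax (fun p => w₁ p - w₂ p - ψ p) z) :
    timeDeriv ψ z ≤ hamiltonian f U z.1 (spaceDeriv ψ z) + (α (w₁ z) - α (w₂ z)) := by
  have hsq : ContDiff ℝ 1 (euclideanSq : E × ℝ → ℝ) := contDiff_euclideanSq
  have hψ' : HasFDerivAt (fun p => ψ p + euclideanSq (p - z)) (fderiv ℝ ψ z) z :=
    ((hψ.differentiable one_ne_zero z).hasFDerivAt.add
      (hasFDerivAt_euclideanSq_sub_const z z)).congr_fderiv (by simp)
  have h := timeDeriv_le_of_strictLocalMax_sub hS hα hg hw₁ hw₂ hc₁ hc₂ hn₁ hn₂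
    (ψ := fun p => ψ p + euclideanSq (p - z)) (by fun_prop) hz hlt <| by
      filter_upwards [hmax] with p hp hle
      simp only [sub_self, euclideanSq_zero, add_zero] at hle
      exact sub_eq_zero.1 (euclideanSq_eq_zero.1
        (le_antisymm (by linarith) (euclideanSq_nonneg _)))
  rwa [timeDeriv_eq_of_hasFDerivAt hψ', spaceDeriv_eq_of_hasFDerivAt hψ'] at h

end Comparison

/-! ### Comparison principle -/

lemma exists_isLocalMax_sub_mul_exp {E : Type*} [TopologicalSpace E]
    {ρ w : E × ℝ → ℝ} (hρ : Continuous ρ) (hcoer : ∀ r, IsCompact {p | 0 ≤ p.2 ∧ ρ p ≤ r})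
    (hw : ContinuousOn w {p | 0 ≤ p.2}) (hw0 : ∀ x, w (x, 0) ≤ 0) {p₀ : E × ℝ} (hp₀ : 0 ≤ p₀.2)
    (hwp₀ : 0 < w p₀) {M k : ℝ}
    (hM : ∀ p : E × ℝ, 0 ≤ p.2 → ρ p ≤ ρ p₀ + 1 → w p ≤ M) (hk : M < w p₀ * Real.exp k) :
    ∃ θ > 0, ∃ z : E × ℝ, 0 < z.2 ∧ ρ z ≤ ρ p₀ + 1 ∧ w z = θ * Real.exp (k * ρ z) ∧
      IsLocalMax (fun p => w p - θ * Real.exp (k * ρ p)) z := by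
  set D : Set (E × ℝ) := {p | 0 ≤ p.2 ∧ ρ p ≤ ρ p₀ + 1}
  have hp₀D : p₀ ∈ D := ⟨hp₀, by linarith⟩
  obtain ⟨z, hzD, hz⟩ := (hcoer (ρ p₀ + 1)).exists_isMaxOn ⟨p₀, hp₀D⟩
    (f := fun p => w p * Real.exp (-(k * ρ p)))
    ((hw.mono fun _ hp => hp.1).mul (by fun_prop))
  set θ := w z * Real.exp (-(k * ρ z))
  have hle (p : E × ℝ) (hp : p ∈ D) : w p * Real.exp (-(k * ρ p)) ≤ θ := hz hp
  have hθ : 0 < θ := (hle p₀ hp₀D).trans_lt' (by positivity)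
  have hwz : w z = θ * Real.exp (k * ρ z) := by
    simp only [θ]
    rw [mul_assoc, ← Real.exp_add, neg_add_cancel, Real.exp_zero, mul_one]
  have hz0 : 0 < z.2 := by
    refine hzD.1.lt_of_ne fun h => (hw0 z.1).not_gt ?_
    rw [show (z.1, 0) = z from Prod.ext rfl h, hwz]
    positivity
  have hzρ : ρ z < ρ p₀ + 1 := by
    refine hzD.2.lt_of_ne fun h => (hM z hzD.1 hzD.2).not_gt (hk.trans_le ?_)
    rw [hwz, h]
    calc w p₀ * Real.exp k
        = w p₀ * Real.exp (-(k * ρ p₀)) * Real.exp (k * (ρ p₀ + 1)) := by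
          rw [mul_assoc, ← Real.exp_add]; ring_nf
      _ ≤ θ * Real.exp (k * (ρ p₀ + 1)) := by gcongr; exact hle p₀ hp₀D
  refine ⟨θ, hθ, z, hz0, hzD.2, hwz, ?_⟩
  filter_upwards [continuous_snd.continuousAt.eventually_const_lt hz0,
    hρ.continuousAt.eventually_lt_const hzρ] with p hp0 hpρ
  have := hle p ⟨hp0.le, hpρ.le⟩
  rw [Real.exp_neg, ← div_eq_mul_inv, div_le_iff₀ (Real.exp_pos _)] at this
  linarith

section Comparison

variable {E W : Type*} [NormedAddCommGroup E] [NormedSpace ℝ E] [FiniteDimensional ℝ E]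

lemma isCompact_setOf_euclideanSq_le (r : ℝ) : IsCompact {x : E | euclideanSq x ≤ r} := by
  refine (Euclidean.isCompact_closedBall (x := (0 : E)) (r := √r)).of_isClosed_subset
    (isClosed_le contDiff_euclideanSq.continuous continuous_const) fun x hx => ?_
  simpa [Euclidean.closedBall, Euclidean.dist] using Real.le_sqrt_of_sq_le hx

/-- The weight `e^{cT}(1 + |x|²)`. For `c` large it is a strict super-solution of the transport part
of the equation, and its sublevel sets in `{T ≥ 0}` are compact, so it localizes the comparison. -/
def coerciveWeight (c : ℝ) (p : E × ℝ) : ℝ :=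
  Real.exp (c * p.2) * (1 + euclideanSq p.1)

lemma contDiff_coerciveWeight (c : ℝ) : ContDiff ℝ 1 (coerciveWeight c : E × ℝ → ℝ) := by
  have hsq : ContDiff ℝ 1 (euclideanSq : E → ℝ) := contDiff_euclideanSq
  unfold coerciveWeight
  fun_prop

lemma isCompact_setOf_coerciveWeight_le {c : ℝ} (hc : 1 ≤ c) (r : ℝ) :
    IsCompact {p : E × ℝ | 0 ≤ p.2 ∧ coerciveWeight c p ≤ r} := by
  refine ((isCompact_setOf_euclideanSq_le r).prod (isCompact_Icc (a := 0) (b := r)))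
    |>.of_isClosed_subset ?_ ?_
  · exact (isClosed_le continuous_const continuous_snd).inter
      (isClosed_le (contDiff_coerciveWeight c).continuous continuous_const)
  · rintro ⟨x, T⟩ ⟨hT : 0 ≤ T, hr : Real.exp (c * T) * (1 + euclideanSq x) ≤ r⟩
    have hq := euclideanSq_nonneg x
    have hexp : 1 + T ≤ Real.exp (c * T) := by
      nlinarith [Real.add_one_le_exp (c * T)]
    have hprod : (1 + T) * (1 + euclideanSq x) ≤ r := hr.trans' (by gcongr)
    have hTq := mul_nonneg hT hq
    exact ⟨show euclideanSq x ≤ r by linarith, hT, show T ≤ r by linarith⟩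

lemma hasFDerivAt_coerciveWeight (c : ℝ) (x : E) (T : ℝ) :
    HasFDerivAt (coerciveWeight c) (Real.exp (c * T) • (fderiv ℝ euclideanSq x).comp (.fst ℝ E ℝ) +
      (1 + euclideanSq x) • Real.exp (c * T) • c • .snd ℝ E ℝ) (x, T) :=
  ((hasFDerivAt_snd (𝕜 := ℝ) (p := (x, T))).const_mul c).exp.mul
    ((HasFDerivAt.comp (g := euclideanSq) (x, T) (hasFDerivAt_euclideanSq x)
      hasFDerivAt_fst).const_add (1 : ℝ))

lemma spaceDeriv_coerciveWeight (c : ℝ) (x : E) (T : ℝ) :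
    spaceDeriv (coerciveWeight c) (x, T) = Real.exp (c * T) • fderiv ℝ euclideanSq x := by
  rw [spaceDeriv_eq_of_hasFDerivAt (hasFDerivAt_coerciveWeight c x T)]
  ext
  simp

lemma timeDeriv_coerciveWeight (c : ℝ) (x : E) (T : ℝ) :
    timeDeriv (coerciveWeight c) (x, T) = c * coerciveWeight c (x, T) := by
  rw [timeDeriv_eq_of_hasFDerivAt (hasFDerivAt_coerciveWeight c x T), coerciveWeight]
  change Real.exp (c * T) * fderiv ℝ euclideanSq x 0 +
    (1 + euclideanSq x) * (Real.exp (c * T) * (c * 1)) = _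
  rw [map_zero]
  ring

variable [TopologicalSpace W] {f : E → W → E} {U : Set W} {C K : NNReal}

theorem IsLipschitzControlSystem.exists_coercive_supersolution
    (hS : IsLipschitzControlSystem f U C K) :
    ∃ ρ : E × ℝ → ℝ, ContDiff ℝ 1 ρ ∧ (∀ r, IsCompact {p | 0 ≤ p.2 ∧ ρ p ≤ r}) ∧
      ∀ p : E × ℝ, 0 ≤ p.2 → hamiltonian f U p.1 (spaceDeriv ρ p) + 1 ≤ timeDeriv ρ p := by
  obtain ⟨κ, hκ0, hκ⟩ := exists_norm_fderiv_euclideanSq_le (E := E)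
  set c := κ * (C + K) + 1
  refine ⟨coerciveWeight c, contDiff_coerciveWeight c,
    isCompact_setOf_coerciveWeight_le (le_add_of_nonneg_left (by positivity)), ?_⟩
  rintro ⟨x, T⟩ (hT : 0 ≤ T)
  have hq := euclideanSq_nonneg x
  have hexp : 1 ≤ Real.exp (c * T) := Real.one_le_exp (by positivity)
  have hH : hamiltonian f U x (fderiv ℝ euclideanSq x) ≤ κ * (C + K) * (1 + euclideanSq x) :=
    calc hamiltonian f U x (fderiv ℝ euclideanSq x)
        ≤ C * ‖fderiv ℝ euclideanSq x‖ + K * (‖fderiv ℝ euclideanSq x‖ * ‖x‖) := by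
          linarith [hS.hamiltonian_le_norm x (fderiv ℝ euclideanSq x)]
      _ ≤ C * (κ * (1 + euclideanSq x)) + K * (κ * euclideanSq x) :=
          add_le_add (mul_le_mul_of_nonneg_left (hκ x).1 C.coe_nonneg)
            (mul_le_mul_of_nonneg_left (hκ x).2 K.coe_nonneg)
      _ ≤ κ * (C + K) * (1 + euclideanSq x) := by
          linarith [mul_nonneg K.coe_nonneg hκ0]
  rw [spaceDeriv_coerciveWeight, timeDeriv_coerciveWeight, coerciveWeight]
  calc hamiltonian f U x (Real.exp (c * T) • fderiv ℝ euclideanSq x) + 1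
      ≤ Real.exp (c * T) * (κ * (C + K) * (1 + euclideanSq x)) +
          Real.exp (c * T) * (1 + euclideanSq x) :=
        add_le_add ((hS.hamiltonian_smul_le x _ (Real.exp_nonneg _)).trans (by gcongr))
          (one_le_mul_of_one_le_of_one_le hexp (by linarith))
    _ = c * (Real.exp (c * T) * (1 + euclideanSq x)) := by ring

variable {α : ℝ → ℝ} {g : E → ℝ} {w₁ w₂ : E × ℝ → ℝ}

lemma le_of_isLocalMax_sub_mul_exp (hS : IsLipschitzControlSystem f U C K)
    (hα : ContinuousOn α (Ici 0)) (hg : Continuous g)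
    (hw₁ : IsViscositySubsolution f U α g w₁) (hw₂ : IsViscositySupersolution f U α g w₂)
    (hc₁ : ContinuousOn w₁ {p | 0 ≤ p.2}) (hc₂ : ContinuousOn w₂ {p | 0 ≤ p.2})
    (hn₁ : ∀ p : E × ℝ, 0 ≤ p.2 → 0 ≤ w₁ p) (hn₂ : ∀ p : E × ℝ, 0 ≤ p.2 → 0 ≤ w₂ p)
    {ρ : E × ℝ → ℝ} (hρ : ContDiff ℝ 1 ρ) {z : E × ℝ} (hz : 0 < z.2)
    (hρz : hamiltonian f U z.1 (spaceDeriv ρ z) + 1 ≤ timeDeriv ρ z) {θ k L : ℝ} (hθ : 0 < θ)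
    (hk : 0 ≤ k) (hL : α (w₁ z) - α (w₂ z) ≤ L * (w₁ z - w₂ z))
    (hwz : w₁ z - w₂ z = θ * Real.exp (k * ρ z))
    (hmax : IsLocalMax (fun p => w₁ p - w₂ p - θ * Real.exp (k * ρ p)) z) : k ≤ L := by
  set ψz := θ * Real.exp (k * ρ z)
  have hψz : 0 < ψz := by positivity
  have hψ : HasFDerivAt (fun p => θ * Real.exp (k * ρ p)) ((k * ψz) • fderiv ℝ ρ z) z :=
    ((hρ.differentiable one_ne_zero z).hasFDerivAt.const_mul k).exp.const_mul θ
      |>.congr_fderiv (by simp only [smul_smul]; congr 1; ring)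
  have hjet := timeDeriv_le_of_isLocalMax_sub hS hα hg hw₁ hw₂ hc₁ hc₂ hn₁ hn₂
    (by fun_prop) hz (by linarith) hmax
  rw [timeDeriv_eq_of_hasFDerivAt hψ, spaceDeriv_eq_of_hasFDerivAt hψ] at hjet
  have hjet' : k * ψz * timeDeriv ρ z ≤
      hamiltonian f U z.1 ((k * ψz) • spaceDeriv ρ z) + (α (w₁ z) - α (w₂ z)) := hjet
  have hscale := hS.hamiltonian_smul_le z.1 (spaceDeriv ρ z) (mul_nonneg hk hψz.le)
  have hgain := mul_le_mul_of_nonneg_left hρz (mul_nonneg hk hψz.le)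
  rw [hwz] at hL
  exact le_of_mul_le_mul_right (by linarith) hψz

theorem viscosity_comparison (hS : IsLipschitzControlSystem f U C K)
    (hα : LocallyLipschitzOn (Ici 0) α) (hg : Continuous g)
    (hw₁ : IsViscositySubsolution f U α g w₁) (hw₂ : IsViscositySupersolution f U α g w₂)
    (hc₁ : ContinuousOn w₁ {p | 0 ≤ p.2}) (hc₂ : ContinuousOn w₂ {p | 0 ≤ p.2})
    (hn₁ : ∀ p : E × ℝ, 0 ≤ p.2 → 0 ≤ w₁ p) (hn₂ : ∀ p : E × ℝ, 0 ≤ p.2 → 0 ≤ w₂ p)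
    (hinit : ∀ x, w₁ (x, 0) ≤ w₂ (x, 0)) (p : E × ℝ) (hp : 0 ≤ p.2) : w₁ p ≤ w₂ p := by
  by_contra! hlt
  obtain ⟨ρ, hρ, hcoer, hρH⟩ := hS.exists_coercive_supersolution
  obtain ⟨M, hM⟩ := (hcoer (ρ p + 1)).bddAbove_image (hc₁.mono fun _ hq => hq.1)
  have hwM (q : E × ℝ) (hq : 0 ≤ q.2) (hqρ : ρ q ≤ ρ p + 1) : w₁ q ≤ M :=
    hM (mem_image_of_mem w₁ ⟨hq, hqρ⟩)
  obtain ⟨L, hL⟩ := exists_lipschitzOnWith_Icc hα M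
  have hδ : 0 < w₁ p - w₂ p := sub_pos.2 hlt
  obtain ⟨k, hkM, hkL⟩ : ∃ k, M < (w₁ p - w₂ p) * Real.exp k ∧ (L : ℝ) < k :=
    (((Real.tendsto_exp_atTop.const_mul_atTop hδ).eventually_gt_atTop M).and
      (eventually_gt_atTop (L : ℝ))).exists
  obtain ⟨θ, hθ, z, hz, hzρ, hwz, hmax⟩ := exists_isLocalMax_sub_mul_exp hρ.continuous hcoer
    (w := fun q => w₁ q - w₂ q) (hc₁.sub hc₂) (fun x => sub_nonpos.2 (hinit x)) hp hδ
    (fun q hq hqρ => (sub_le_self _ (hn₂ q hq)).trans (hwM q hq hqρ)) hkM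
  have hzlt : w₂ z < w₁ z := sub_pos.1 (hwz ▸ by positivity)
  have hαz : α (w₁ z) - α (w₂ z) ≤ L * (w₁ z - w₂ z) := by
    have hlip := hL.dist_le_mul (w₁ z) ⟨hn₁ z hz.le, hwM z hz.le hzρ⟩ (w₂ z)
      ⟨hn₂ z hz.le, hzlt.le.trans (hwM z hz.le hzρ)⟩
    rw [Real.dist_eq, Real.dist_eq, abs_of_pos (sub_pos.2 hzlt)] at hlip
    exact (le_abs_self _).trans hlip
  exact hkL.not_ge (le_of_isLocalMax_sub_mul_exp hS hα.continuousOn hg hw₁ hw₂ hc₁ hc₂ hn₁ hn₂ hρ hz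
    (hρH z hz.le) hθ (L.coe_nonneg.trans hkL.le) hαz hwz hmax)

end Comparison

/-! ### Admissible trajectories -/

section AdmissiblePairs

variable {n m : ℕ} {f : (Fin n → ℝ) → (Fin m → ℝ) → Fin n → ℝ} {U : Set (Fin m → ℝ)}
  {C K : NNReal} {x : Fin n → ℝ} {u w : ℝ → Fin m → ℝ} {ξ ζ : ℝ → Fin n → ℝ} {h : ℝ}

lemma isControl_const {u₀ : Fin m → ℝ} (hu₀ : u₀ ∈ U) : IsControl U fun _ => u₀ :=
  ⟨measurable_const, fun _ _ => hu₀⟩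

lemma IsControl.shift (hu : IsControl U u) (hh : 0 ≤ h) : IsControl U fun t => u (h + t) :=
  ⟨hu.1.comp (measurable_const_add h), fun _ ht => hu.2 _ (add_nonneg hh ht)⟩

lemma IsControl.piecewise_shift (hu : IsControl U u) (hw : IsControl U w) :
    IsControl U fun t => if t ≤ h then u t else w (t - h) := by
  refine ⟨.ite measurableSet_Iic hu.1 (hw.1.comp (measurable_sub_const h)), fun t ht => ?_⟩
  beta_reduce
  split_ifs with hth
  · exact hu.2 t ht
  · exact hw.2 _ (by linarith)

/-- A control signal `u` valued in `U` together with an admissible trajectory `ξ` from `x`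
under `u`: the pairs over which the CB-VF takes its supremum. -/
structure IsAdmissiblePair (f : (Fin n → ℝ) → (Fin m → ℝ) → Fin n → ℝ) (U : Set (Fin m → ℝ))
    (x : Fin n → ℝ) (u : ℝ → Fin m → ℝ) (ξ : ℝ → Fin n → ℝ) : Prop where
  isControl : IsControl U u
  isIntegralSolution : IsIntegralSolution (fun t y => f y (u t)) x ξ

lemma IsLipschitzControlSystem.exists_isAdmissiblePair (hS : IsLipschitzControlSystem f U C K)
    (hu : IsControl U u) (x : Fin n → ℝ) : ∃ ξ, IsAdmissiblePair f U x u ξ :=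
  ((hS.isCaratheodory hu.1 hu.2).exists_isIntegralSolution x).imp fun _ hξ => ⟨hu, hξ⟩

namespace IsAdmissiblePair

lemma continuous (hξ : IsAdmissiblePair f U x u ξ) : Continuous ξ :=
  hξ.isIntegralSolution.1

lemma zero (hξ : IsAdmissiblePair f U x u ξ) : ξ 0 = x :=
  hξ.isIntegralSolution.zero

lemma isCaratheodory (hS : IsLipschitzControlSystem f U C K) (hξ : IsAdmissiblePair f U x u ξ) :
    IsCaratheodory (fun t y => f y (u t)) C K :=
  hS.isCaratheodory hξ.isControl.1 hξ.isControl.2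

lemma shift (hS : IsLipschitzControlSystem f U C K) (hξ : IsAdmissiblePair f U x u ξ)
    (hh : 0 ≤ h) : IsAdmissiblePair f U (ξ h) (fun t => u (h + t)) (fun t => ξ (h + t)) :=
  ⟨hξ.isControl.shift hh, hξ.isIntegralSolution.shift (hξ.isCaratheodory hS) hh⟩

lemma exists_concat (hS : IsLipschitzControlSystem f U C K) (hξ : IsAdmissiblePair f U x u ξ)
    (hζ : IsAdmissiblePair f U (ξ h) w ζ) (hh : 0 ≤ h) :
    ∃ u' ξ', IsAdmissiblePair f U x u' ξ' ∧ (∀ t ≤ h, ξ' t = ξ t) ∧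
      ∀ t, 0 ≤ t → ξ' (h + t) = ζ t := by
  let u' (t : ℝ) := if t ≤ h then u t else w (t - h)
  let ξ' (t : ℝ) := if t ≤ h then ξ t else ζ (t - h)
  have hu' : IsControl U u' := hξ.isControl.piecewise_shift hζ.isControl
  have hcont : Continuous ξ' :=
    hξ.continuous.if_le (hζ.continuous.comp (continuous_id.sub continuous_const)) continuous_id
      continuous_const fun t (ht : t = h) => by simp [ht, hζ.zero]
  have hleft (t : ℝ) (ht : t ≤ h) : ξ' t = ξ t := if_pos ht
  have hright (t : ℝ) (ht : 0 ≤ t) : ξ' (h + t) = ζ t := by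
    rcases ht.eq_or_lt with rfl | ht
    · simp [ξ', hζ.zero]
    · simp [ξ', ht]
  refine ⟨u', ξ', ⟨hu', .of_shift (hS.isCaratheodory hu'.1 hu'.2) hcont (fun t ht => ?_) hh ?_⟩,
    hleft, hright⟩
  · rw [hleft t ht.2, hξ.isIntegralSolution.2 t ht.1]
    congr 1
    refine intervalIntegral.integral_congr fun s hs => ?_
    have hsh : s ≤ h := by rw [uIcc_of_le ht.1] at hs; exact hs.2.trans ht.2
    simp [ξ', u', hsh]
  · rw [hleft h le_rfl]
    exact hζ.isIntegralSolution.congr (by fun_prop) hright fun t ht => by simp [u', ht.not_ge]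

lemma apply_sub_le (hS : IsLipschitzControlSystem f U C K) (hξ : IsAdmissiblePair f U x u ξ)
    (hh : 0 ≤ h) (A : (Fin n → ℝ) →L[ℝ] ℝ) {c : ℝ}
    (hc : ∀ t ∈ Icc 0 h, hamiltonian f U (ξ t) A ≤ c) : A (ξ h - x) ≤ c * h := by
  have hint := (hξ.isCaratheodory hS).intervalIntegrable hξ.continuous le_rfl hh
  calc A (ξ h - x) = ∫ t in 0..h, A (f (ξ t) (u t)) := by
        rw [A.intervalIntegral_comp_comm hint, hξ.isIntegralSolution.2 h hh, add_sub_cancel_left]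
    _ ≤ ∫ _ in 0..h, c := intervalIntegral.integral_mono_on hh
        ⟨A.integrable_comp hint.1, A.integrable_comp hint.2⟩ (by simp) fun t ht =>
          (hS.le_hamiltonian (hξ.isControl.2 t ht.1) (ξ t) A).trans (hc t ht)
    _ = c * h := by simp [mul_comm]

end IsAdmissiblePair

namespace IsLipschitzControlSystem

lemma exists_uniform_bound (hS : IsLipschitzControlSystem f U C K) (R T : ℝ) :
    ∃ M : NNReal, ∀ x u ξ, ‖x‖ ≤ R → IsAdmissiblePair f U x u ξ →
      (∀ t ∈ Icc 0 T, ‖ξ t‖ ≤ M) ∧ LipschitzOnWith M ξ (Icc 0 T) := by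
  set B : ℝ := (R + C * T) * Real.exp (K * T)
  set M := (max B (C + K * B)).toNNReal
  have hBM : B ≤ M := (le_max_left _ _).trans (Real.le_coe_toNNReal _)
  have hfM : C + K * B ≤ M := (le_max_right _ _).trans (Real.le_coe_toNNReal _)
  refine ⟨M, fun x u ξ hx hξ => ?_⟩
  have hF := hξ.isCaratheodory hS
  have hξB (t : ℝ) (ht : t ∈ Icc 0 T) : ‖ξ t‖ ≤ B := by
    have hT : 0 ≤ T := ht.1.trans ht.2
    have hpos : 0 ≤ R + C * T := add_nonneg ((norm_nonneg x).trans hx) (by positivity)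
    calc ‖ξ t‖ ≤ (‖x‖ + C * T) * Real.exp (K * t) := hξ.isIntegralSolution.norm_le_mul_exp hF ht
      _ ≤ (R + C * T) * Real.exp (K * T) := by gcongr; exact ht.2
  refine ⟨fun t ht => (hξB t ht).trans hBM, LipschitzOnWith.of_dist_le_mul fun t ht s hs => ?_⟩
  wlog hst : s ≤ t generalizing s t
  · rw [dist_comm, dist_comm t]
    exact this s hs t ht (le_of_not_ge hst)
  rw [dist_eq_norm, Real.dist_eq, abs_of_nonneg (sub_nonneg.2 hst)]
  refine hξ.isIntegralSolution.norm_sub_le_mul hF hs.1 hst fun τ hτ => ?_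
  have hτ0 : 0 ≤ τ := hs.1.trans hτ.1.le
  calc ‖f (ξ τ) (u τ)‖ ≤ C + K * ‖ξ τ‖ := hF.norm_le hτ0 _
    _ ≤ C + K * B := by gcongr; exact hξB τ ⟨hτ0, hτ.2.trans ht.2⟩
    _ ≤ M := hfM

end IsLipschitzControlSystem

end AdmissiblePairs

/-! ### The value function -/

section Value

variable {n m : ℕ} {f : (Fin n → ℝ) → (Fin m → ℝ) → Fin n → ℝ} {U : Set (Fin m → ℝ)}
  {C K : NNReal} {α : ℝ → ℝ} {β : ℝ → ℝ → ℝ} {g : (Fin n → ℝ) → ℝ} {v : (Fin n → ℝ) × ℝ → ℝ}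
  {x : Fin n → ℝ} {u : ℝ → Fin m → ℝ} {ξ : ℝ → Fin n → ℝ} {r T : ℝ}

/-- `v` is the control barrier value function of `g` and `α`, with `β = β_α`; as in the implicit
definition, `v(x, T)` is determined by its image under the injective map `β_α(·, T)`. -/
def IsCBVF (f : (Fin n → ℝ) → (Fin m → ℝ) → Fin n → ℝ) (U : Set (Fin m → ℝ))
    (β : ℝ → ℝ → ℝ) (g : (Fin n → ℝ) → ℝ) (v : (Fin n → ℝ) × ℝ → ℝ) : Prop :=
  ∀ x T, 0 ≤ T → 0 ≤ v (x, T) ∧ β (v (x, T)) T = cbvfPayoff f U β g x T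

lemma sInf_image_payoff_le (hβ : IsBetaFor α β) (hg0 : ∀ x, 0 ≤ g x) (ξ : ℝ → Fin n → ℝ) {t : ℝ}
    (ht : t ∈ Icc 0 T) :
    sInf ((fun t => β (g (ξ t)) (T - t)) '' Icc 0 T) ≤ β (g (ξ t)) (T - t) :=
  csInf_le ⟨0, forall_mem_image.2 fun _ hs => hβ.nonneg (hg0 _) (sub_nonneg.2 hs.2)⟩
    (mem_image_of_mem _ ht)

lemma exists_of_lt_cbvfPayoff (hS : IsLipschitzControlSystem f U C K) (hβ : IsBetaFor α β)
    (hg0 : ∀ x, 0 ≤ g x) {y : ℝ} (hy : y < cbvfPayoff f U β g x T) :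
    ∃ u ξ, IsAdmissiblePair f U x u ξ ∧ ∀ t ∈ Icc 0 T, y < β (g (ξ t)) (T - t) := by
  obtain ⟨u₀, hu₀⟩ := hS.nonempty
  obtain ⟨ξ₀, hξ₀⟩ := hS.exists_isAdmissiblePair (isControl_const hu₀) x
  obtain ⟨_, ⟨u, ξ, hu, hξ, rfl⟩, hlt⟩ :=
    exists_lt_of_lt_csSup (by exact ⟨_, _, ξ₀, hξ₀.isControl, hξ₀.isIntegralSolution, rfl⟩) hy
  exact ⟨u, ξ, ⟨hu, hξ⟩, fun t ht => hlt.trans_le (sInf_image_payoff_le hβ hg0 ξ ht)⟩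

lemma le_cbvfPayoff (hβ : IsBetaFor α β) (hg0 : ∀ x, 0 ≤ g x) (hT : 0 ≤ T)
    (hξ : IsAdmissiblePair f U x u ξ) {y : ℝ}
    (hy : ∀ t ∈ Icc 0 T, y ≤ β (g (ξ t)) (T - t)) : y ≤ cbvfPayoff f U β g x T := by
  have hbdd : BddAbove {y | ∃ u ξ, IsControl U u ∧ IsTrajectory f x u ξ ∧
      y = sInf ((fun t => β (g (ξ t)) (T - t)) '' Icc 0 T)} := by
    refine ⟨β (g x) T, ?_⟩
    rintro _ ⟨w, ζ, hw, hζ, rfl⟩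
    have hwζ : IsAdmissiblePair f U x w ζ := ⟨hw, hζ⟩
    simpa [hwζ.zero] using sInf_image_payoff_le hβ hg0 ζ (left_mem_Icc.2 hT)
  exact (le_csInf ((nonempty_Icc.2 hT).image _) (forall_mem_image.2 hy)).trans
    (le_csSup hbdd ⟨u, ξ, hξ.isControl, hξ.isIntegralSolution, rfl⟩)

namespace IsCBVF

lemma nonneg (hv : IsCBVF f U β g v) {p : (Fin n → ℝ) × ℝ} (hp : 0 ≤ p.2) : 0 ≤ v p :=
  (hv p.1 p.2 hp).1

lemma exists_of_lt (hS : IsLipschitzControlSystem f U C K) (hα : LocallyLipschitzOn (Ici 0) α)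
    (hβ : IsBetaFor α β) (hg0 : ∀ x, 0 ≤ g x) (hv : IsCBVF f U β g v) (hT : 0 ≤ T) (hr : 0 ≤ r)
    (hlt : r < v (x, T)) :
    ∃ u ξ, IsAdmissiblePair f U x u ξ ∧ ∀ t ∈ Icc 0 T, β r t < g (ξ t) := by
  obtain ⟨hv0, hvT⟩ := hv x T hT
  have hpay : β r T < cbvfPayoff f U β g x T := hvT ▸ hβ.strictMonoOn_init hα hT hr hv0 hlt
  obtain ⟨u, ξ, hξ, hlt⟩ := exists_of_lt_cbvfPayoff hS hβ hg0 hpay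
  refine ⟨u, ξ, hξ, fun t ht => ?_⟩
  have htT : 0 ≤ T - t := sub_nonneg.2 ht.2
  have hflow : β (β r t) (T - t) < β (g (ξ t)) (T - t) := by
    rw [hβ.comp_add hα hr ht.1 htT, add_sub_cancel]
    exact hlt t ht
  exact ((hβ.strictMonoOn_init hα htT).lt_iff_lt (hβ.nonneg hr ht.1) (hg0 _)).1 hflow

lemma le_of_forall_le (hα : LocallyLipschitzOn (Ici 0) α) (hβ : IsBetaFor α β)
    (hg0 : ∀ x, 0 ≤ g x) (hv : IsCBVF f U β g v) (hT : 0 ≤ T) (hr : 0 ≤ r)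
    (hξ : IsAdmissiblePair f U x u ξ) (hle : ∀ t ∈ Icc 0 T, β r t ≤ g (ξ t)) : r ≤ v (x, T) := by
  obtain ⟨hv0, hvT⟩ := hv x T hT
  refine ((hβ.strictMonoOn_init hα hT).le_iff_le hr hv0).1 (hvT ▸ ?_)
  refine le_cbvfPayoff hβ hg0 hT hξ fun t ht => ?_
  have htT : 0 ≤ T - t := sub_nonneg.2 ht.2
  have hflow := hβ.comp_add hα hr ht.1 htT
  rw [add_sub_cancel] at hflow
  exact hflow ▸ (hβ.strictMonoOn_init hα htT).monotoneOn (hβ.nonneg hr ht.1) (hg0 _) (hle t ht)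

lemma le_obstacle (hS : IsLipschitzControlSystem f U C K) (hα : LocallyLipschitzOn (Ici 0) α)
    (hβ : IsBetaFor α β) (hg0 : ∀ x, 0 ≤ g x) (hv : IsCBVF f U β g v) (hT : 0 ≤ T) :
    v (x, T) ≤ g x := by
  by_contra! hlt
  obtain ⟨u, ξ, hξ, hξg⟩ := hv.exists_of_lt hS hα hβ hg0 hT (hg0 x) hlt
  simpa [hβ.zero (hg0 x), hξ.zero] using hξg 0 (left_mem_Icc.2 hT)

lemma apply_zero (hS : IsLipschitzControlSystem f U C K) (hα : LocallyLipschitzOn (Ici 0) α)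
    (hβ : IsBetaFor α β) (hg0 : ∀ x, 0 ≤ g x) (hv : IsCBVF f U β g v) (x : Fin n → ℝ) :
    v (x, 0) = g x := by
  obtain ⟨u₀, hu₀⟩ := hS.nonempty
  obtain ⟨ξ, hξ⟩ := hS.exists_isAdmissiblePair (isControl_const hu₀) x
  refine (hv.le_obstacle hS hα hβ hg0 le_rfl).antisymm
    (hv.le_of_forall_le hα hβ hg0 le_rfl (hg0 x) hξ fun t ht => ?_)
  rw [ht.2.antisymm ht.1, hβ.zero (hg0 x), hξ.zero]

end IsCBVF

end Value

section Continuity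

variable {n m : ℕ} {f : (Fin n → ℝ) → (Fin m → ℝ) → Fin n → ℝ} {U : Set (Fin m → ℝ)}
  {C K : NNReal} {α : ℝ → ℝ} {β : ℝ → ℝ → ℝ} {g : (Fin n → ℝ) → ℝ} {v : (Fin n → ℝ) × ℝ → ℝ}
  {r r' : ℝ}

lemma IsAdmissiblePair.norm_sub_le (hS : IsLipschitzControlSystem f U C K) {x y : Fin n → ℝ}
    {u : ℝ → Fin m → ℝ} {ξ η : ℝ → Fin n → ℝ} (hξ : IsAdmissiblePair f U x u ξ)
    (hη : IsAdmissiblePair f U y u η) {M : NNReal} {s t T : ℝ} (hηM : LipschitzOnWith M η (Icc 0 T))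
    (hs : s ∈ Icc 0 T) (ht : t ∈ Icc 0 T) :
    ‖η t - ξ s‖ ≤ M * |t - s| + ‖y - x‖ * Real.exp (K * T) :=
  calc ‖η t - ξ s‖ ≤ ‖η t - η s‖ + ‖η s - ξ s‖ := norm_sub_le_norm_sub_add_norm_sub _ _ _
    _ ≤ M * |t - s| + ‖y - x‖ * Real.exp (K * s) := by
      refine add_le_add ?_ (hη.isIntegralSolution.norm_sub_le_mul_exp (hη.isCaratheodory hS)
        hξ.isIntegralSolution hs.1)
      simpa only [dist_eq_norm, Real.norm_eq_abs] using hηM.dist_le_mul t ht s hs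
    _ ≤ M * |t - s| + ‖y - x‖ * Real.exp (K * T) := by gcongr; exact hs.2

lemma IsLipschitzControlSystem.eventually_forall_apply_lt_add
    (hS : IsLipschitzControlSystem f U C K) (hg : Continuous g) (p : (Fin n → ℝ) × ℝ) {ε : ℝ}
    (hε : 0 < ε) :
    ∀ᶠ Q : ((Fin n → ℝ) × ℝ) × ((Fin n → ℝ) × ℝ) in 𝓝 (p, p), 0 ≤ Q.1.2 → ∀ u ξ η,
      IsAdmissiblePair f U Q.1.1 u ξ → IsAdmissiblePair f U Q.2.1 u η →
        ∀ t ∈ Icc 0 Q.2.2, g (ξ (min t Q.1.2)) < g (η t) + ε := by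
  obtain ⟨M, hM⟩ := hS.exists_uniform_bound (‖p.1‖ + 1) (p.2 + 1)
  have hgM : UniformContinuousOn g (Metric.closedBall 0 M) :=
    (isCompact_closedBall _ _).uniformContinuousOn_of_continuous hg.continuousOn
  obtain ⟨δ, hδ, hgδ⟩ := Metric.uniformContinuousOn_iff.1 hgM ε hε
  have hclose : ∀ᶠ Q : ((Fin n → ℝ) × ℝ) × ((Fin n → ℝ) × ℝ) in 𝓝 (p, p),
      M * |Q.2.2 - Q.1.2| + ‖Q.2.1 - Q.1.1‖ * Real.exp (K * (p.2 + 1)) < δ := by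
    have hcont : Continuous fun Q : ((Fin n → ℝ) × ℝ) × ((Fin n → ℝ) × ℝ) =>
      M * |Q.2.2 - Q.1.2| + ‖Q.2.1 - Q.1.1‖ * Real.exp (K * (p.2 + 1)) := by fun_prop
    exact hcont.continuousAt.eventually_lt_const (by simpa)
  have hnear : ∀ᶠ q : (Fin n → ℝ) × ℝ in 𝓝 p, ‖q.1‖ < ‖p.1‖ + 1 ∧ q.2 < p.2 + 1 :=
    (continuous_fst.norm.continuousAt.eventually_lt_const (lt_add_one _)).and
      (continuous_snd.continuousAt.eventually_lt_const (lt_add_one _))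
  filter_upwards [hclose, hnear.prod_nhds hnear] with ⟨⟨x, S⟩, ⟨y, T⟩⟩ hQ ⟨⟨hx, _⟩, hy, hT⟩
  intro (hS0 : 0 ≤ S) u ξ η hξ hη t (ht : t ∈ Icc 0 T)
  obtain ⟨hξM, -⟩ := hM x u ξ hx.le hξ
  obtain ⟨hηM, hηL⟩ := hM y u η hy.le hη
  have ht' : t ∈ Icc 0 (p.2 + 1) := ⟨ht.1, ht.2.trans hT.le⟩
  have hs' : min t S ∈ Icc 0 (p.2 + 1) := ⟨le_min ht.1 hS0, (min_le_left _ _).trans ht'.2⟩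
  have hdist : ‖η t - ξ (min t S)‖ < δ :=
    calc ‖η t - ξ (min t S)‖
        ≤ M * |t - min t S| + ‖y - x‖ * Real.exp (K * (p.2 + 1)) :=
          hξ.norm_sub_le hS hη hηL hs' ht'
      _ ≤ M * |T - S| + ‖y - x‖ * Real.exp (K * (p.2 + 1)) := by
          gcongr ?_ + _
          exact mul_le_mul_of_nonneg_left (abs_sub_min_le ht.2) M.coe_nonneg
      _ < δ := hQ
  have hgdist := hgδ (η t) (mem_closedBall_zero_iff.2 (hηM t ht')) (ξ (min t S))
    (mem_closedBall_zero_iff.2 (hξM _ hs')) (by rwa [dist_eq_norm])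
  rw [Real.dist_eq, abs_sub_lt_iff] at hgdist
  change g (ξ (min t S)) < g (η t) + ε
  linarith

namespace IsCBVF

lemma eventually_le_of_lt (hS : IsLipschitzControlSystem f U C K)
    (hα : LocallyLipschitzOn (Ici 0) α) (hβ : IsBetaFor α β) (hg : Continuous g)
    (hg0 : ∀ x, 0 ≤ g x) (hv : IsCBVF f U β g v) (p : (Fin n → ℝ) × ℝ) (hr : 0 ≤ r)
    (hrr' : r < r') :
    ∀ᶠ Q : ((Fin n → ℝ) × ℝ) × ((Fin n → ℝ) × ℝ) in 𝓝 (p, p),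
      0 ≤ Q.1.2 → 0 ≤ Q.2.2 → r' < v Q.1 → r ≤ v Q.2 := by
  have hr' : 0 ≤ r' := hr.trans hrr'.le
  obtain ⟨ε, hε, hgap⟩ := hβ.exists_pos_forall_le_sub hα hr hrr' (p.2 + 1)
  have hnear : ∀ᶠ Q : ((Fin n → ℝ) × ℝ) × ((Fin n → ℝ) × ℝ) in 𝓝 (p, p), Q.2.2 < p.2 + 1 :=
    (continuous_snd.comp continuous_snd).continuousAt.eventually_lt_const (lt_add_one _)
  filter_upwards [hS.eventually_forall_apply_lt_add hg p hε, hnear] with ⟨⟨x, S⟩, y, T⟩ hclose hT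
  intro (hS0 : 0 ≤ S) (hT0 : 0 ≤ T) hlt
  obtain ⟨u, ξ, hξ, hξg⟩ := hv.exists_of_lt hS hα hβ hg0 hS0 hr' hlt
  obtain ⟨η, hη⟩ := hS.exists_isAdmissiblePair hξ.isControl y
  refine hv.le_of_forall_le hα hβ hg0 hT0 hr hη fun t ht => ?_
  have hmin0 : 0 ≤ min t S := le_min ht.1 hS0
  have hanti : β r' t ≤ β r' (min t S) := hβ.antitoneOn hα hr' hmin0 ht.1 (min_le_left _ _)
  linarith [hgap t ⟨ht.1, ht.2.trans hT.le⟩, hξg (min t S) ⟨hmin0, min_le_right _ _⟩,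
    hclose hS0 u ξ η hξ hη t ht]

theorem continuousOn (hS : IsLipschitzControlSystem f U C K)
    (hα : LocallyLipschitzOn (Ici 0) α) (hβ : IsBetaFor α β) (hg : Continuous g)
    (hg0 : ∀ x, 0 ≤ g x) (hv : IsCBVF f U β g v) : ContinuousOn v {p | 0 ≤ p.2} := by
  intro p hp
  have hvp := hv.nonneg hp
  refine tendsto_order.2 ⟨fun a ha => ?_, fun a ha => ?_⟩
  · rcases lt_or_ge a 0 with ha0 | ha0
    · filter_upwards [self_mem_nhdsWithin] with q hq using ha0.trans_le (hv.nonneg hq)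
    obtain ⟨r, har, hr⟩ := exists_between ha
    obtain ⟨r', hrr', hr'⟩ := exists_between hr
    have hev := hv.eventually_le_of_lt hS hα hβ hg hg0 p (ha0.trans har.le) hrr'
    filter_upwards [self_mem_nhdsWithin, mem_nhdsWithin_of_mem_nhds
      ((tendsto_const_nhds.prodMk_nhds tendsto_id).eventually hev)] with q hq hpq
    exact har.trans_le (hpq hp hq hr')
  · obtain ⟨r, hr, hra⟩ := exists_between ha
    obtain ⟨r', hrr', hr'a⟩ := exists_between hra
    have hev := hv.eventually_le_of_lt hS hα hβ hg hg0 p (hvp.trans hr.le) hrr'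
    filter_upwards [self_mem_nhdsWithin, mem_nhdsWithin_of_mem_nhds
      ((tendsto_id.prodMk_nhds tendsto_const_nhds).eventually hev)] with q hq hqp
    exact (le_of_not_gt fun h => (hqp hq hp h).not_gt hr).trans_lt hr'a

end IsCBVF

end Continuity

/-! ### Dynamic programming and the HJ equation -/

section DynamicProgramming

variable {n m : ℕ} {f : (Fin n → ℝ) → (Fin m → ℝ) → Fin n → ℝ} {U : Set (Fin m → ℝ)}
  {C K : NNReal} {α : ℝ → ℝ} {β : ℝ → ℝ → ℝ} {g : (Fin n → ℝ) → ℝ} {v : (Fin n → ℝ) × ℝ → ℝ}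
  {x : Fin n → ℝ} {u : ℝ → Fin m → ℝ} {ξ : ℝ → Fin n → ℝ} {h r T : ℝ}

namespace IsCBVF

theorem exists_flow_sub_lt (hS : IsLipschitzControlSystem f U C K)
    (hα : LocallyLipschitzOn (Ici 0) α) (hβ : IsBetaFor α β) (hg0 : ∀ x, 0 ≤ g x)
    (hv : IsCBVF f U β g v) (hh : 0 ≤ h) (hhT : h ≤ T) {ε : ℝ} (hε : 0 < ε) :
    ∃ u ξ, IsAdmissiblePair f U x u ξ ∧ β (v (x, T)) h - ε < v (ξ h, T - h) := by
  have hT : 0 ≤ T := hh.trans hhT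
  have hTh : 0 ≤ T - h := sub_nonneg.2 hhT
  have hv0 : 0 ≤ v (x, T) := hv.nonneg hT
  rcases hv0.eq_or_lt' with hzero | hpos
  · obtain ⟨u₀, hu₀⟩ := hS.nonempty
    obtain ⟨ξ, hξ⟩ := hS.exists_isAdmissiblePair (isControl_const hu₀) x
    have hv0' : 0 ≤ v (ξ h, T - h) := hv.nonneg hTh
    exact ⟨_, ξ, hξ, by rw [hzero]; linarith [hβ.le_init le_rfl hh]⟩
  have hclose : ∀ᶠ r in 𝓝[<] v (x, T), β (v (x, T)) h - ε < β r h :=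
    ((hβ.continuousOn_init hα hh).continuousAt (Ici_mem_nhds hpos)).eventually_const_lt
      (sub_lt_self _ hε) |>.filter_mono nhdsWithin_le_nhds
  obtain ⟨r, hr, hr0, hrv⟩ := (hclose.and (Ioo_mem_nhdsLT hpos)).exists
  obtain ⟨u, ξ, hξ, hξg⟩ := hv.exists_of_lt hS hα hβ hg0 hT hr0.le hrv
  refine ⟨u, ξ, hξ, hr.trans_le <| hv.le_of_forall_le hα hβ hg0 hTh (hβ.nonneg hr0.le hh)
    (hξ.shift hS hh) fun t ht => ?_⟩
  rw [hβ.comp_add hα hr0.le hh ht.1]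
  exact (hξg (h + t) ⟨add_nonneg hh ht.1, by linarith [ht.2]⟩).le

theorem le_flow_of_forall_le (hS : IsLipschitzControlSystem f U C K)
    (hα : LocallyLipschitzOn (Ici 0) α) (hβ : IsBetaFor α β) (hg0 : ∀ x, 0 ≤ g x)
    (hv : IsCBVF f U β g v) (hh : 0 ≤ h) (hhT : h ≤ T) (hξ : IsAdmissiblePair f U x u ξ)
    (hr : v (x, T) < r) (hrg : ∀ t ∈ Icc 0 h, r ≤ g (ξ t)) :
    v (ξ h, T - h) ≤ β (v (x, T)) h := by
  have hT : 0 ≤ T := hh.trans hhT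
  have hv0 : 0 ≤ v (x, T) := hv.nonneg hT
  by_contra! hlt
  have hclose : ∀ᶠ s in 𝓝[>] v (x, T), β s h < v (ξ h, T - h) :=
    ((hβ.continuousOn_init hα hh _ hv0).eventually_lt_const hlt).filter_mono
      (nhdsWithin_mono _ (Ioi_subset_Ici hv0))
  obtain ⟨s, hs, hvs, hsr⟩ := (hclose.and (Ioo_mem_nhdsGT hr)).exists
  have hs0 : 0 ≤ s := hv0.trans hvs.le
  obtain ⟨w, ζ, hζ, hζg⟩ :=
    hv.exists_of_lt hS hα hβ hg0 (sub_nonneg.2 hhT) (hβ.nonneg hs0 hh) hs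
  obtain ⟨u', ξ', hξ', hleft, hright⟩ := hξ.exists_concat hS hζ hh
  refine hvs.not_ge (hv.le_of_forall_le hα hβ hg0 hT hs0 hξ' fun t ht => ?_)
  rcases le_or_gt t h with hth | hth
  · rw [hleft t hth]
    exact (hβ.le_init hs0 ht.1).trans (hsr.le.trans (hrg t ⟨ht.1, hth⟩))
  · have hht : 0 ≤ t - h := sub_nonneg.2 hth.le
    have hgt := hζg (t - h) ⟨hht, sub_le_sub_right ht.2 h⟩
    rw [hβ.comp_add hα hs0 hh hht, ← hright _ hht, add_sub_cancel] at hgt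
    exact hgt.le

lemma eventually_le_flow_of_lt (hS : IsLipschitzControlSystem f U C K)
    (hα : LocallyLipschitzOn (Ici 0) α) (hβ : IsBetaFor α β) (hg : Continuous g)
    (hg0 : ∀ x, 0 ≤ g x) (hv : IsCBVF f U β g v) (hT : 0 < T) (hξ : IsAdmissiblePair f U x u ξ)
    (hlt : v (x, T) < g x) : ∀ᶠ h in 𝓝[>] 0, v (ξ h, T - h) ≤ β (v (x, T)) h := by
  obtain ⟨r, hvr, hrg⟩ := exists_between hlt
  have hnear : ∀ᶠ t in 𝓝 0, r < g (ξ t) :=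
    (hg.comp hξ.continuous).continuousAt.eventually_const_lt (by simpa [hξ.zero] using hrg)
  obtain ⟨δ, hδ, hball⟩ := Metric.eventually_nhds_iff.1 hnear
  filter_upwards [Ioo_mem_nhdsGT (lt_min hT hδ)] with h hh
  refine hv.le_flow_of_forall_le hS hα hβ hg0 hh.1.le (hh.2.le.trans (min_le_left _ _)) hξ hvr
    fun t ht => (hball ?_).le
  rw [Real.dist_0_eq_abs, abs_of_nonneg ht.1]
  exact ht.2.trans_lt (hh.2.trans_le (min_le_right _ _))

end IsCBVF

end DynamicProgramming

section ViscosityProperty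

variable {n m : ℕ} {f : (Fin n → ℝ) → (Fin m → ℝ) → Fin n → ℝ} {U : Set (Fin m → ℝ)}
  {C K : NNReal} {α : ℝ → ℝ} {β : ℝ → ℝ → ℝ} {g : (Fin n → ℝ) → ℝ} {v φ : (Fin n → ℝ) × ℝ → ℝ}

namespace IsLipschitzControlSystem

lemma exists_norm_sub_le (hS : IsLipschitzControlSystem f U C K) (p : (Fin n → ℝ) × ℝ) :
    ∃ M : ℝ, 0 < M ∧ ∀ h ∈ Icc (0 : ℝ) 1, ∀ u ξ, IsAdmissiblePair f U p.1 u ξ →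
      ‖(ξ h, p.2 - h) - p‖ ≤ M * h := by
  obtain ⟨M, hM⟩ := hS.exists_uniform_bound ‖p.1‖ 1
  refine ⟨max M 1, by positivity, fun h hh u ξ hξ => ?_⟩
  have hlip := (hM _ u ξ le_rfl hξ).2.dist_le_mul h hh 0 (left_mem_Icc.2 zero_le_one)
  rw [hξ.zero, dist_eq_norm, Real.dist_0_eq_abs, abs_of_nonneg hh.1] at hlip
  rw [Prod.norm_def]
  refine max_le (hlip.trans (mul_le_mul_of_nonneg_right (le_max_left _ _) hh.1)) ?_
  simpa [abs_of_nonneg hh.1] using mul_le_mul_of_nonneg_right (le_max_right (M : ℝ) 1) hh.1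

lemma eventually_forall_isAdmissiblePair (hS : IsLipschitzControlSystem f U C K)
    {p : (Fin n → ℝ) × ℝ} {P : (Fin n → ℝ) × ℝ → Prop} (hP : ∀ᶠ q in 𝓝 p, P q) :
    ∀ᶠ h in 𝓝[>] 0, ∀ u ξ, IsAdmissiblePair f U p.1 u ξ → P (ξ h, p.2 - h) := by
  obtain ⟨M, hM, hbound⟩ := hS.exists_norm_sub_le p
  obtain ⟨δ, hδ, hball⟩ := Metric.eventually_nhds_iff.1 hP
  filter_upwards [Ioo_mem_nhdsGT (lt_min one_pos (div_pos hδ hM))] with h hh u ξ hξ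
  refine hball ?_
  rw [dist_eq_norm]
  calc ‖(ξ h, p.2 - h) - p‖ ≤ M * h := hbound h ⟨hh.1.le, hh.2.le.trans (min_le_left _ _)⟩ u ξ hξ
    _ < δ := (lt_div_iff₀' hM).1 (hh.2.trans_le (min_le_right _ _))

lemma eventually_apply_le (hS : IsLipschitzControlSystem f U C K) (hφ : Differentiable ℝ φ)
    (p : (Fin n → ℝ) × ℝ) {ε : ℝ} (hε : 0 < ε) :
    ∀ᶠ h in 𝓝[>] 0, ∀ u ξ, IsAdmissiblePair f U p.1 u ξ → φ (ξ h, p.2 - h) ≤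
      φ p + (hamiltonian f U p.1 (spaceDeriv φ p) - timeDeriv φ p + ε) * h := by
  obtain ⟨M, hM, hbound⟩ := hS.exists_norm_sub_le p
  set A := spaceDeriv φ p
  have hdiff : ∀ᶠ q in 𝓝 p, φ q ≤ φ p + fderiv ℝ φ p (q - p) + ε / (2 * M) * ‖q - p‖ := by
    filter_upwards [(hφ p).hasFDerivAt.isLittleO.bound (by positivity : 0 < ε / (2 * M))] with q hq
    linarith [(le_abs_self _).trans hq]
  have hsmall : ∀ᶠ h in 𝓝[>] (0 : ℝ), ‖A‖ * (K * (M * h)) < ε / 2 := by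
    have hcont : Continuous fun h : ℝ => ‖A‖ * (K * (M * h)) := by fun_prop
    exact (hcont.continuousAt.eventually_lt_const (by simpa)).filter_mono nhdsWithin_le_nhds
  filter_upwards [hS.eventually_forall_isAdmissiblePair hdiff, hsmall,
    Ioo_mem_nhdsGT (zero_lt_one' ℝ)] with h hφh hAh hh u ξ hξ
  have hham (t : ℝ) (ht : t ∈ Icc 0 h) :
      hamiltonian f U (ξ t) A ≤ hamiltonian f U p.1 A + ε / 2 := by
    have hξt : ‖ξ t - p.1‖ ≤ M * h :=
      calc ‖ξ t - p.1‖ ≤ ‖(ξ t, p.2 - t) - p‖ := norm_fst_le ((ξ t, p.2 - t) - p)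
        _ ≤ M * t := hbound t ⟨ht.1, ht.2.trans hh.2.le⟩ u ξ hξ
        _ ≤ M * h := by gcongr; exact ht.2
    calc hamiltonian f U (ξ t) A
        ≤ hamiltonian f U p.1 A + ‖A‖ * (K * ‖ξ t - p.1‖) := hS.hamiltonian_le_add_norm_sub _ _ A
      _ ≤ hamiltonian f U p.1 A + ‖A‖ * (K * (M * h)) := by gcongr
      _ ≤ hamiltonian f U p.1 A + ε / 2 := by gcongr
  have hderiv : fderiv ℝ φ p ((ξ h, p.2 - h) - p) = A (ξ h - p.1) - timeDeriv φ p * h := by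
    change fderiv ℝ φ p (ξ h - p.1, p.2 - h - p.2) = _
    rw [fderiv_apply_eq]
    ring
  have hrem : ε / (2 * M) * ‖(ξ h, p.2 - h) - p‖ ≤ ε / 2 * h :=
    calc ε / (2 * M) * ‖(ξ h, p.2 - h) - p‖ ≤ ε / (2 * M) * (M * h) := by
          gcongr
          exact hbound h ⟨hh.1.le, hh.2.le⟩ u ξ hξ
      _ = ε / 2 * h := by field_simp
  linarith [hφh u ξ hξ, hξ.apply_sub_le hS hh.1.le A hham]

end IsLipschitzControlSystem

lemma IsAdmissiblePair.hasDerivWithinAt_comp (hS : IsLipschitzControlSystem f U C K)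
    {p : (Fin n → ℝ) × ℝ} {u₀ : Fin m → ℝ} {ξ : ℝ → Fin n → ℝ}
    (hξ : IsAdmissiblePair f U p.1 (fun _ => u₀) ξ) (hφ : DifferentiableAt ℝ φ p) :
    HasDerivWithinAt (fun h => φ (ξ h, p.2 - h))
      (spaceDeriv φ p (f p.1 u₀) - timeDeriv φ p) (Ici 0) 0 := by
  have hu₀ : u₀ ∈ U := hξ.isControl.2 0 le_rfl
  have hcont : Continuous fun t => f (ξ t) u₀ :=
    (hS.lipschitzWith u₀ hu₀).continuous.comp hξ.continuous
  have hξ' : HasDerivWithinAt ξ (f p.1 u₀) (Ici 0) 0 := by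
    have hint := (hcont.integral_hasStrictDerivAt 0 0).hasDerivAt.const_add p.1
    rw [hξ.zero] at hint
    exact hint.hasDerivWithinAt.congr_of_mem hξ.isIntegralSolution.2 self_mem_Ici
  have hpair : HasDerivWithinAt (fun h => (ξ h, p.2 - h)) (f p.1 u₀, -1) (Ici 0) 0 :=
    hξ'.prodMk ((hasDerivWithinAt_id 0 _).const_sub p.2)
  have hp : (ξ 0, p.2 - 0) = p := by rw [hξ.zero, sub_zero]
  have hφ' : HasFDerivAt φ (fderiv ℝ φ p) (ξ 0, p.2 - 0) := hp.symm ▸ hφ.hasFDerivAt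
  refine (hφ'.comp_hasDerivWithinAt (f := fun h => (ξ h, p.2 - h)) 0 hpair).congr_deriv ?_
  rw [fderiv_apply_eq]
  ring

namespace IsCBVF

theorem isViscositySubsolution (hS : IsLipschitzControlSystem f U C K)
    (hα : LocallyLipschitzOn (Ici 0) α) (hβ : IsBetaFor α β) (hg0 : ∀ x, 0 ≤ g x)
    (hv : IsCBVF f U β g v) : IsViscositySubsolution f U α g v := by
  intro p hp φ hφ hmax
  refine ⟨?_, hv.le_obstacle hS hα hβ hg0 hp.le⟩
  have hv0 : 0 ≤ v p := hv.nonneg hp.le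
  refine le_of_forall_pos_le_add fun ε hε => ?_
  set H := hamiltonian f U p.1 (spaceDeriv φ p)
  have hflow : ∀ᶠ h in 𝓝[>] 0, β (v p) h ≤ v p + (H - timeDeriv φ p + ε) * h := by
    filter_upwards [hS.eventually_forall_isAdmissiblePair hmax,
      hS.eventually_apply_le (hφ.differentiable one_ne_zero) p hε, Ioo_mem_nhdsGT hp]
      with h hmaxh hφh hh
    refine le_of_forall_sub_le fun δ hδ => ?_
    obtain ⟨u, ξ, hξ, hlt⟩ := hv.exists_flow_sub_lt hS hα hβ hg0 (x := p.1) hh.1.le hh.2.le hδ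
    linarith [hmaxh u ξ hξ, hφh u ξ hξ]
  have hline : HasDerivWithinAt (fun h => v p + (H - timeDeriv φ p + ε) * h)
      (H - timeDeriv φ p + ε) (Ici 0) 0 := by
    simpa using ((hasDerivWithinAt_id (0 : ℝ) (Ici 0)).const_mul
      (H - timeDeriv φ p + ε)).const_add (v p)
  have hderiv := le_of_hasDerivWithinAt_of_eventually_le (hβ.hasDerivWithinAt hv0 le_rfl) hline
    (by simp [hβ.zero hv0]) hflow
  rw [hβ.zero hv0] at hderiv
  linarith

theorem isViscositySupersolution (hS : IsLipschitzControlSystem f U C K)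
    (hα : LocallyLipschitzOn (Ici 0) α) (hβ : IsBetaFor α β) (hg : Continuous g)
    (hg0 : ∀ x, 0 ≤ g x) (hv : IsCBVF f U β g v) : IsViscositySupersolution f U α g v := by
  intro p hp φ hφ hmin
  refine (le_or_gt (g p.1) (v p)).symm.imp_left fun hlt => ?_
  have hv0 : 0 ≤ v p := hv.nonneg hp.le
  refine le_sub_iff_add_le.1 (hS.hamiltonian_le fun u₀ hu₀ => ?_)
  obtain ⟨ξ, hξ⟩ := hS.exists_isAdmissiblePair (isControl_const hu₀) p.1
  have hφβ : ∀ᶠ h in 𝓝[>] 0, φ (ξ h, p.2 - h) ≤ φ p - v p + β (v p) h := by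
    filter_upwards [hS.eventually_forall_isAdmissiblePair hmin,
      hv.eventually_le_flow_of_lt hS hα hβ hg hg0 hp hξ hlt] with h hminh hflow
    linarith [hminh _ ξ hξ]
  have hderiv := le_of_hasDerivWithinAt_of_eventually_le
    (hξ.hasDerivWithinAt_comp hS (hφ.differentiable one_ne_zero p))
    ((hβ.hasDerivWithinAt hv0 le_rfl).const_add (φ p - v p))
    (by simp [hξ.zero, hβ.zero hv0]) hφβ
  rw [hβ.zero hv0] at hderiv
  linarith

end IsCBVF

end ViscosityProperty

theorem cbvf_is_unique_viscosity_solution_general {n m : ℕ}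
    {f : (Fin n → ℝ) → (Fin m → ℝ) → Fin n → ℝ} {U : Set (Fin m → ℝ)} {C K : NNReal}
    (hS : IsLipschitzControlSystem f U C K) {α : ℝ → ℝ} (hα : LocallyLipschitzOn (Ici 0) α)
    {β : ℝ → ℝ → ℝ} (hβ : IsBetaFor α β) {g : (Fin n → ℝ) → ℝ} (hg : Continuous g)
    (hg0 : ∀ x, 0 ≤ g x) {v : (Fin n → ℝ) × ℝ → ℝ} (hv : IsCBVF f U β g v) :
    ContinuousOn v {p | 0 ≤ p.2} ∧ (∀ x, v (x, 0) = g x) ∧ IsViscositySolnCBVF f U α g v ∧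
      ∀ v' : (Fin n → ℝ) × ℝ → ℝ, ContinuousOn v' {p | 0 ≤ p.2} → (∀ p, 0 ≤ p.2 → 0 ≤ v' p) →
        (∀ x, v' (x, 0) = g x) → IsViscositySolnCBVF f U α g v' → ∀ p, 0 ≤ p.2 → v' p = v p := by
  have hcont := hv.continuousOn hS hα hβ hg hg0
  have hinit := hv.apply_zero hS hα hβ hg0
  have hsub := hv.isViscositySubsolution hS hα hβ hg0
  have hsuper := hv.isViscositySupersolution hS hα hβ hg hg0
  refine ⟨hcont, hinit, isViscositySolnCBVF_iff.2 ⟨hsub, hsuper⟩,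
    fun v' hcont' hv' hinit' hsoln' p hp => ?_⟩
  obtain ⟨hsub', hsuper'⟩ := isViscositySolnCBVF_iff.1 hsoln'
  have hv0 (q : (Fin n → ℝ) × ℝ) (hq : 0 ≤ q.2) : 0 ≤ v q := hv.nonneg hq
  have hagree (x : Fin n → ℝ) : v' (x, 0) = v (x, 0) := (hinit' x).trans (hinit x).symm
  exact le_antisymm
    (viscosity_comparison hS hα hg hsub' hsuper hcont' hcont hv' hv0 (fun x => (hagree x).le) p hp)
    (viscosity_comparison hS hα hg hsub hsuper' hcont hcont' hv0 hv' (fun x => (hagree x).ge) p hp)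

/-- The CB-VF `v` corresponding to `g` and `α` (defined implicitly by
`β_α (v (x,T)) T = cbvfPayoff f U β g x T`) is continuous on `ℝⁿ × [0,∞)`, satisfies
`v (·,0) = g`, is a viscosity solution on `ℝⁿ × (0,∞)` of
`max { ∂_T v - H_α(x, v, ∇v), v - g x } = 0`, and is the unique continuous nonnegative
function with these properties. -/
theorem cbvf_is_unique_viscosity_solution {n m : ℕ}
    (f : (Fin n → ℝ) → (Fin m → ℝ) → Fin n → ℝ) (U : Set (Fin m → ℝ))
    (hU : IsCompact U) (hUne : U.Nonempty)
    (hf : ∃ K : NNReal, LipschitzOnWith K (Function.uncurry f) (Set.univ ×ˢ U))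
    (α : ℝ → ℝ) (hα : IsLocallyLipschitzClassK α)
    (β : ℝ → ℝ → ℝ) (hβ : IsBetaFor α β)
    (g : (Fin n → ℝ) → ℝ) (hg : Continuous g) (hg0 : ∀ x, 0 ≤ g x)
    (v : (Fin n → ℝ) × ℝ → ℝ)
    (hv : ∀ x : Fin n → ℝ, ∀ T : ℝ, 0 ≤ T →
      0 ≤ v (x, T) ∧ β (v (x, T)) T = cbvfPayoff f U β g x T) :
    ContinuousOn v {p : (Fin n → ℝ) × ℝ | 0 ≤ p.2} ∧
    (∀ x : Fin n → ℝ, v (x, 0) = g x) ∧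
    IsViscositySolnCBVF f U α g v ∧
    ∀ v' : (Fin n → ℝ) × ℝ → ℝ,
      ContinuousOn v' {p : (Fin n → ℝ) × ℝ | 0 ≤ p.2} →
      (∀ p : (Fin n → ℝ) × ℝ, 0 ≤ p.2 → 0 ≤ v' p) →
      (∀ x : Fin n → ℝ, v' (x, 0) = g x) →
      IsViscositySolnCBVF f U α g v' →
      ∀ p : (Fin n → ℝ) × ℝ, 0 ≤ p.2 → v' p = v p := by
  obtain ⟨K, hK⟩ := hf
  obtain ⟨C, hS⟩ := exists_isLipschitzControlSystem_of_isCompact hU hUne hK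
  exact cbvf_is_unique_viscosity_solution_general hS (fun _ hx => hα.2 _ hx) hβ hg hg0 hv
end
end
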